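/- arXiv:1708.00910 — 2 statements merged into one kernel-verified Lean document; each statement's English description precedes it below -/
import Mathlib

section
/- Cancellation lemma for multipliers: Let X, Y be rearrangement-invariant Banach function spaces over 𝕋 with the Fatou property. If X ⊙ M(X,Y) = Y (X factorizes Y), then the Köthe dual of M(X,Y) satisfies M(X,Y)' = X ⊙ Y'. -/
open MeasureTheory Filter Topology ComplexConjugate
open scoped ENNReal

noncomputable section

instance fact_two_pi_pos : Fact (0 < 2 * Real.pi) := ⟨by positivity⟩

/-- The unit circle, modelled additively as `ℝ / 2πℤ`. -/
abbrev 𝕋 := AddCircle (2 * Real.pi)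

/-- Normalized Lebesgue (Haar) measure on the circle. -/
def μ : Measure 𝕋 := AddCircle.haarAddCircle

/-- A (quasi-)norm functional on measurable functions on the circle, with values in `ℝ≥0∞`. -/
abbrev NormFn := (𝕋 → ℂ) → ℝ≥0∞

/-- Membership in the function space determined by the norm functional `N`. -/
def MemN (N : NormFn) (f : 𝕋 → ℂ) : Prop :=
  AEStronglyMeasurable f μ ∧ N f < ⊤

/-- The closed unit ball of the space determined by `N`. -/
def unitBall (N : NormFn) : Set (𝕋 → ℂ) :=
  {f | AEStronglyMeasurable f μ ∧ N f ≤ 1}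

/-- The Köthe dual (associate space) norm of `N`. -/
def kdualN (N : NormFn) : NormFn := fun g =>
  ⨆ f : unitBall N, ∫⁻ t, (‖f.1 t * g t‖₊ : ℝ≥0∞) ∂μ

/-- The norm of the space `M(X,Y)` of pointwise multipliers, i.e. the operator norm of
multiplication by `a` from the space of `NX` to the space of `NY`. -/
def multN (NX NY : NormFn) : NormFn := fun a =>
  ⨆ f : unitBall NX, NY (fun t => a t * f.1 t)

/-- The norm of the pointwise product space `X ⊙ Y`. -/
def prodN (NX NY : NormFn) : NormFn := fun h =>
  ⨅ p : {p : (𝕋 → ℂ) × (𝕋 → ℂ) //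
      AEStronglyMeasurable p.1 μ ∧ AEStronglyMeasurable p.2 μ ∧
      h =ᵐ[μ] fun t => p.1 t * p.2 t},
    NX p.1.1 * NY p.1.2

/-- Membership in the Hardy space `H[X]`: membership in `X` together with the vanishing of all
negative Fourier coefficients. -/
def HardyMemN (N : NormFn) (f : 𝕋 → ℂ) : Prop :=
  AEStronglyMeasurable f μ ∧ N f < ⊤ ∧ ∀ n : ℤ, n < 0 → fourierCoeff f n = 0

/-- Operator norm of `T` from the space of `N1` to that of `N2`. -/
def opN (N1 N2 : NormFn) (T : (𝕋 → ℂ) → (𝕋 → ℂ)) : ℝ≥0∞ :=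
  ⨆ f : unitBall N1, N2 (T f.1)

/-- Operator norm of `T` restricted to the Hardy space of `N1`, measured in `N2`. -/
def hardyOpN (N1 N2 : NormFn) (T : (𝕋 → ℂ) → (𝕋 → ℂ)) : ℝ≥0∞ :=
  ⨆ f : {f : 𝕋 → ℂ // HardyMemN N1 f ∧ N1 f ≤ 1}, N2 (T f.1)

/-- `P` is (a realization of) the Riesz projection: it respects a.e. equality and, on integrable
functions, keeps the Fourier coefficients with nonnegative index and kills the others. -/
def IsRieszProj (P : (𝕋 → ℂ) → (𝕋 → ℂ)) : Prop :=
  (∀ f g, f =ᵐ[μ] g → P f =ᵐ[μ] P g) ∧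
  (∀ f g, P (f + g) =ᵐ[μ] P f + P g) ∧
  (∀ (c : ℂ) f, P (fun t => c * f t) =ᵐ[μ] fun t => c * P f t) ∧
  (∀ f, Integrable f μ → Integrable (P f) μ ∧
    ∀ n : ℤ, fourierCoeff (P f) n = if 0 ≤ n then fourierCoeff f n else 0)

/-- The flip operator `(Jf)(t) = t⁻¹ f(t⁻¹)`, written additively on `ℝ/2πℤ`. -/
def Jflip (f : 𝕋 → ℂ) : 𝕋 → ℂ := fun x => fourier (-1) x * f (-x)

/-- The dilation operator `D_s`: `(D_s f)(e^{iθ}) = f(e^{iθs})` for `θs ∈ [0,2π)`, `0` otherwise. -/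
def dilOp (s : ℝ) (f : 𝕋 → ℂ) : 𝕋 → ℂ := fun x =>
  let θ : ℝ := (AddCircle.equivIco (2 * Real.pi) 0 x : ℝ)
  if 0 ≤ s * θ ∧ s * θ < 2 * Real.pi then f ((s * θ : ℝ) : 𝕋) else 0

/-- Operator norm of the dilation `D_s` on the space of `N`. -/
def dilNorm (N : NormFn) (s : ℝ) : ℝ≥0∞ :=
  ⨆ f : unitBall N, N (dilOp s f.1)

/-- `α` is the lower Boyd index of the space of `N`. -/
def boydLower (N : NormFn) (α : ℝ) : Prop :=
  Tendsto (fun s : ℝ => Real.log (dilNorm N (1 / s)).toReal / Real.log s) (𝓝[>] 0) (𝓝 α)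

/-- `β` is the upper Boyd index of the space of `N`. -/
def boydUpper (N : NormFn) (β : ℝ) : Prop :=
  Tendsto (fun s : ℝ => Real.log (dilNorm N (1 / s)).toReal / Real.log s) atTop (𝓝 β)

/-- The space of `N` has nontrivial Boyd indices. -/
def NontrivialBoyd (N : NormFn) : Prop :=
  ∃ α β : ℝ, 0 < α ∧ β < 1 ∧ boydLower N α ∧ boydUpper N β

/-- Trigonometric polynomials. -/
def IsTrigPoly (f : 𝕋 → ℂ) : Prop :=
  ∃ (n : ℕ) (c : ℤ → ℂ), f = fun x => ∑ k ∈ Finset.Icc (-(n : ℤ)) n, c k * fourier k x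

/-- Analytic trigonometric polynomials. -/
def IsAnalyticPoly (f : 𝕋 → ℂ) : Prop :=
  ∃ (n : ℕ) (c : ℕ → ℂ), f = fun x => ∑ k ∈ Finset.range (n + 1), c k * fourier (k : ℤ) x

/-- The Fejér kernel `K_n`. -/
def fejer (n : ℕ) : 𝕋 → ℂ := fun x =>
  ∑ k ∈ Finset.Icc (-(n : ℤ)) n, (1 - (|(k : ℝ)| / (n + 1)) : ℂ) * fourier k x

/-- Convolution with the Fejér kernel, `f * K_n`. -/
def convFejer (n : ℕ) (f : 𝕋 → ℂ) : 𝕋 → ℂ := fun x =>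
  ∫ y, f y * fejer n (x - y) ∂μ

/-- The Banach envelope norm of `N`. -/
def envN (N : NormFn) : NormFn := fun f =>
  ⨅ d : {d : Σ n : ℕ, Fin n → 𝕋 → ℂ // f =ᵐ[μ] fun t => ∑ i, d.2 i t},
    ∑ i, N (d.1.2 i)

/-- The Banach envelope norm of the Hardy space `H[Z]` (decompositions within `H[Z]`). -/
def envHardyN (N : NormFn) : NormFn := fun f =>
  ⨅ d : {d : Σ n : ℕ, Fin n → 𝕋 → ℂ //
      (∀ i, HardyMemN N (d.2 i)) ∧ f =ᵐ[μ] fun t => ∑ i, d.2 i t},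
    ∑ i, N (d.1.2 i)

/-- The norm of the 1/2-concavification `Z^{(1/2)}`: `‖f‖ = ‖|f|^{1/2}‖²`. -/
def concavHalf (N : NormFn) : NormFn := fun f =>
  (N (fun t => (Real.sqrt ‖f t‖ : ℂ))) ^ 2

/-- `dist_{M(X,Y)}(a, conj H[M(X,Y)])`: the infimum of multiplier norms of symbols `b` whose
Fourier coefficients agree with those of `a` for positive indices. -/
def hankelDist (NX NY : NormFn) (a : 𝕋 → ℂ) : ℝ≥0∞ :=
  ⨅ b : {b : 𝕋 → ℂ // AEStronglyMeasurable b μ ∧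
      ∀ k : ℤ, 0 < k → fourierCoeff b k = fourierCoeff a k},
    multN NX NY b.1

/-- The Kuratowski measure of noncompactness of the set `A`, with diameters measured by `N`. -/
def setMNC (N : NormFn) (A : Set (𝕋 → ℂ)) : ℝ≥0∞ :=
  ⨅ d : {d : ℝ≥0∞ // ∃ (n : ℕ) (B : Fin n → Set (𝕋 → ℂ)),
      (∀ f ∈ A, ∃ i, f ∈ B i) ∧
      ∀ i, ∀ f ∈ B i, ∀ g ∈ B i, N (fun t => f t - g t) ≤ d}, d.1

/-- The decreasing rearrangement `f*` of `f`. -/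
def decRearr (f : 𝕋 → ℂ) (s : ℝ) : ℝ≥0∞ :=
  sInf {l : ℝ≥0∞ | μ {t | l < (‖f t‖₊ : ℝ≥0∞)} ≤ ENNReal.ofReal s}

/-- The Lorentz norm `‖f‖_{L^{p,q}}` on the circle (total measure 1). -/
def lorentzN (p q : ℝ≥0∞) : NormFn := fun f =>
  if q = ⊤ then ⨆ s : Set.Ioo (0 : ℝ) 1, decRearr f s.1 * ENNReal.ofReal (s.1 ^ (1 / p).toReal)
  else (∫⁻ s in Set.Ioo (0 : ℝ) 1,
      (decRearr f s * ENNReal.ofReal (s ^ (1 / p).toReal)) ^ q.toReal / ENNReal.ofReal s)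
    ^ (1 / q).toReal

/-- `dist_{L^{p,q}}(a, conj H^{p,q})` expressed via matching of positive Fourier coefficients. -/
def lorDist (p q : ℝ≥0∞) (a : 𝕋 → ℂ) : ℝ≥0∞ :=
  ⨅ b : {b : 𝕋 → ℂ // AEStronglyMeasurable b μ ∧
      ∀ k : ℤ, 0 < k → fourierCoeff b k = fourierCoeff a k},
    lorentzN p q b.1

/-- The analytic polynomial with coefficients `c 0, …, c n`. -/
def aPoly (n : ℕ) (c : ℕ → ℂ) : 𝕋 → ℂ := fun x =>
  ∑ k ∈ Finset.range (n + 1), c k * fourier (k : ℤ) x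

/-- The polynomial `p^c(t) = conj (p(1/t))`, i.e. with conjugated coefficients. -/
def aPolyC (n : ℕ) (c : ℕ → ℂ) : 𝕋 → ℂ := aPoly n fun k => (starRingEnd ℂ) (c k)

/-- A Banach function space over the circle, encoded by its norm functional. -/
structure BFS where
  N : NormFn
  ae_congr : ∀ f g, f =ᵐ[μ] g → N f = N g
  add_le : ∀ f g, N (f + g) ≤ N f + N g
  smul_eq : ∀ (c : ℂ) (f), N (fun t => c * f t) = (‖c‖₊ : ℝ≥0∞) * N f
  ideal : ∀ f g, AEStronglyMeasurable g μ → (∀ᵐ t ∂μ, ‖g t‖ ≤ ‖f t‖) → N g ≤ N f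
  const_finite : N (fun _ => 1) < ⊤
  norm_eq_zero : ∀ f, AEStronglyMeasurable f μ → N f = 0 → f =ᵐ[μ] fun _ => 0
  semiFatou : ∀ (f : ℕ → 𝕋 → ℂ) (g : 𝕋 → ℂ),
    (∀ n, AEStronglyMeasurable (f n) μ) → AEStronglyMeasurable g μ →
    (∀ᵐ t ∂μ, Monotone (fun n => ‖f n t‖) ∧
      Tendsto (fun n => ‖f n t‖) atTop (𝓝 ‖g t‖)) →
    N g < ⊤ → N g = ⨆ n, N (f n)
  complete : ∀ f : ℕ → 𝕋 → ℂ, (∀ n, AEStronglyMeasurable (f n) μ) →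
    (∑' n, N (f n)) < ⊤ →
    ∃ g, AEStronglyMeasurable g μ ∧ N g < ⊤ ∧
      Tendsto (fun n => N (fun t => g t - ∑ k ∈ Finset.range n, f k t)) atTop (𝓝 0)

/-- A quasi-Banach function space over the circle, with quasi-triangle constant `kappa`. -/
structure QBFS where
  N : NormFn
  kappa : ℝ≥0∞
  one_le_kappa : 1 ≤ kappa
  kappa_finite : kappa < ⊤
  ae_congr : ∀ f g, f =ᵐ[μ] g → N f = N g
  add_le : ∀ f g, N (f + g) ≤ kappa * (N f + N g)
  smul_eq : ∀ (c : ℂ) (f), N (fun t => c * f t) = (‖c‖₊ : ℝ≥0∞) * N f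
  ideal : ∀ f g, AEStronglyMeasurable g μ → (∀ᵐ t ∂μ, ‖g t‖ ≤ ‖f t‖) → N g ≤ N f
  const_finite : N (fun _ => 1) < ⊤
  norm_eq_zero : ∀ f, AEStronglyMeasurable f μ → N f = 0 → f =ᵐ[μ] fun _ => 0
  semiFatou : ∀ (f : ℕ → 𝕋 → ℂ) (g : 𝕋 → ℂ),
    (∀ n, AEStronglyMeasurable (f n) μ) → AEStronglyMeasurable g μ →
    (∀ᵐ t ∂μ, Monotone (fun n => ‖f n t‖) ∧
      Tendsto (fun n => ‖f n t‖) atTop (𝓝 ‖g t‖)) →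
    N g < ⊤ → N g = ⨆ n, N (f n)

/-- Rearrangement invariance of the norm functional `N`. -/
def RearrInvN (N : NormFn) : Prop :=
  ∀ f g, AEStronglyMeasurable f μ → AEStronglyMeasurable g μ →
    (∀ lam : ℝ, 0 < lam → μ {t | lam < ‖f t‖} = μ {t | lam < ‖g t‖}) →
    N f = N g

/-- `f` is an order continuous element of the space of `N`. -/
def OrderContElemN (N : NormFn) (f : 𝕋 → ℂ) : Prop :=
  MemN N f ∧ ∀ g : ℕ → 𝕋 → ℂ, (∀ n, AEStronglyMeasurable (g n) μ) →
    (∀ n, ∀ᵐ t ∂μ, ‖g n t‖ ≤ ‖f t‖) →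
    (∀ᵐ t ∂μ, Tendsto (fun n => ‖g n t‖) atTop (𝓝 0)) →
    Tendsto (fun n => N (g n)) atTop (𝓝 0)

/-- The space of `N` is order continuous (equivalently, separable). -/
def OrderContN (N : NormFn) : Prop :=
  ∀ f, MemN N f → OrderContElemN N f

/-- The Fatou property of the norm functional `N`. -/
def FatouN (N : NormFn) : Prop :=
  ∀ (f : ℕ → 𝕋 → ℂ) (g : 𝕋 → ℂ),
    (∀ n, AEStronglyMeasurable (f n) μ) → AEStronglyMeasurable g μ →
    (∀ᵐ t ∂μ, Monotone (fun n => ‖f n t‖) ∧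
      Tendsto (fun n => ‖f n t‖) atTop (𝓝 ‖g t‖)) →
    N g = ⨆ n, N (f n)

open scoped NNReal

/-!
The inclusion `X ⊙ Y' ⊆ M(X,Y)'` is immediate. For the converse let `g ∈ M(X,Y)'` and `R > 0`.
Factoring an element `y = c x z` of the unit ball of `Y` through the unit balls of `X` and `M(X,Y)`
gives `∫ |g y| / (1 + R |x|) ≤ (c / R) ‖g‖`, because `c |x| / (1 + R |x|) ≤ c / R`. Hence every `y`
admits a `u` in the ball of radius `R` of `X` with `∫ |g y| / (1 + |u|) ≤ (c / R) ‖g‖`. The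
functions `s = 1 / (1 + |u|)` form a convex, bounded and, by the Fatou property, closed subset of
`L²`, which is therefore weakly compact. As `∫ w s` is bilinear, the minimax theorem provides one
`s` that works for all `y`. Then `g = s⁻¹ (s g)` is a factorization in `X ⊙ Y'` of norm at most
`(‖1‖ + R) (c / R) ‖g‖`, which tends to `c ‖g‖` as `R → ∞`.
-/

section Hilbert

variable {H : Type*} [NormedAddCommGroup H] [InnerProductSpace ℝ H] [CompleteSpace H]

theorem inclusionInDoubleDual_surjective :
    Function.Surjective (NormedSpace.inclusionInDoubleDual ℝ H) := by
  intro Φ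
  refine ⟨(InnerProductSpace.toDual ℝ H).symm
    (Φ.comp (InnerProductSpace.toDual ℝ H).toContinuousLinearEquiv.toContinuousLinearMap), ?_⟩
  ext f
  obtain ⟨v, rfl⟩ := (InnerProductSpace.toDual ℝ H).surjective f
  rw [NormedSpace.dual_def, InnerProductSpace.toDual_apply_apply, real_inner_comm,
    InnerProductSpace.toDual_symm_apply]
  rfl

theorem isCompact_toWeakSpace_image {B : Set H} (hconv : Convex ℝ B) (hclosed : IsClosed B)
    (hbdd : Bornology.IsBounded B) : IsCompact (toWeakSpace ℝ H '' B) := by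
  rw [← hclosed.closure_eq, hconv.toWeakSpace_closure ℝ]
  refine NormedSpace.isCompact_closure_of_isBounded ℝ H _ ?_ ?_
  · rwa [Set.preimage_image_eq _ (toWeakSpace ℝ H).injective]
  · intro Φ _
    obtain ⟨x, hx⟩ := inclusionInDoubleDual_surjective (H := H) Φ
    exact ⟨toWeakSpace ℝ H x, hx⟩

theorem exists_forall_inner_le {B W : Set H} (hne : B.Nonempty) (hB : Convex ℝ B)
    (hclosed : IsClosed B) (hbdd : Bornology.IsBounded B) (hW : Convex ℝ W) {C : ℝ}
    (h : ∀ w ∈ W, ∃ s ∈ B, inner ℝ w s ≤ C) : ∃ s ∈ B, ∀ w ∈ W, inner ℝ w s ≤ C := by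
  by_contra! hcon
  let B' := toWeakSpace ℝ H '' B
  let pairing (s : WeakSpace ℝ H) (w : H) : ℝ := inner ℝ w ((toWeakSpace ℝ H).symm s)
  have hcont (w : H) : Continuous fun s => pairing s w :=
    WeakBilin.eval_continuous (topDualPairing ℝ H).flip (InnerProductSpace.toDual ℝ H w)
  have hcompact : IsCompact B' := isCompact_toWeakSpace_image hB hclosed hbdd
  have hB' : Convex ℝ B' := hB.linear_image (toWeakSpace ℝ H).toLinearMap
  obtain ⟨F, hF⟩ := hcompact.elim_finite_subcover (fun w : W => {s | C < pairing s w})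
    (fun w => isOpen_lt continuous_const (hcont w)) (by
      rintro _ ⟨s, hs, rfl⟩
      obtain ⟨w, hw, hlt⟩ := hcon s hs
      exact Set.mem_iUnion.2 ⟨⟨w, hw⟩, hlt⟩)
  obtain ⟨w, hw, hlt⟩ := Sion.exists_lt_iInf_of_lt_iInf_of_finite (f := pairing)
    (hne.image _) hcompact
    (fun w _ => (hcont w).lowerSemicontinuous.lowerSemicontinuousOn _)
    (fun w _ => (((innerₗ H w).comp (toWeakSpace ℝ H).symm.toLinearMap).convexOn hB').quasiconvexOn)
    hW
    (fun s _ => (Continuous.upperSemicontinuous (by fun_prop)).upperSemicontinuousOn _)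
    (fun s _ => (((innerₗ H).flip ((toWeakSpace ℝ H).symm s)).concaveOn hW).quasiconcaveOn)
    hB' (F.finite_toSet.image Subtype.val) (Subtype.coe_image_subset W F) (t := C) fun s hs => by
      obtain ⟨w, hwF, hlt⟩ := Set.mem_iUnion₂.1 (hF hs)
      exact ⟨w, ⟨w, hwF, rfl⟩, hlt⟩
  obtain ⟨s, hs, hle⟩ := h w hw
  exact (hlt _ ⟨s, hs, rfl⟩).not_ge hle

end Hilbert

instance isProbabilityMeasure_mu : IsProbabilityMeasure μ :=
  inferInstanceAs (IsProbabilityMeasure AddCircle.haarAddCircle)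

/-- Absolute homogeneity together with definiteness: the two properties shared by the norm
functionals of `X`, `M(X,Y)` and `Y'` that allow rescaling the factors of a product into the unit
balls. -/
structure IsHomogeneousDefinite (N : NormFn) : Prop where
  smul_eq : ∀ (c : ℂ) f, N (fun t => c * f t) = ‖c‖ₑ * N f
  ae_eq_zero : ∀ f, AEStronglyMeasurable f μ → N f = 0 → f =ᵐ[μ] fun _ => 0

theorem BFS.isHomogeneousDefinite (X : BFS) : IsHomogeneousDefinite X.N :=
  ⟨X.smul_eq, X.norm_eq_zero⟩

namespace IsHomogeneousDefinite

variable {N : NormFn}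

theorem apply_zero (hN : IsHomogeneousDefinite N) : N (fun _ => 0) = 0 := by
  simpa using hN.smul_eq 0 fun _ => 0

theorem zero_mem_unitBall (hN : IsHomogeneousDefinite N) : (fun _ => 0) ∈ unitBall N :=
  ⟨aestronglyMeasurable_const, hN.apply_zero.trans_le zero_le_one⟩

theorem smul_mem_unitBall (hN : IsHomogeneousDefinite N) {f : 𝕋 → ℂ}
    (hf : AEStronglyMeasurable f μ) {c : ℝ≥0} (hc : c * N f ≤ 1) :
    (fun t => (c : ℂ) * f t) ∈ unitBall N :=
  ⟨hf.const_mul _, (hN.smul_eq c f).trans_le (by simpa [enorm_eq_nnnorm] using hc)⟩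

theorem exists_const_mem_unitBall (hN : IsHomogeneousDefinite N) (h1 : N (fun _ => 1) < ⊤) :
    ∃ c : ℂ, c ≠ 0 ∧ (fun _ => c) ∈ unitBall N := by
  lift N (fun _ => 1) to ℝ≥0 using h1.ne with a ha
  refine ⟨((a + 1)⁻¹ : ℝ≥0), mod_cast (inv_pos.2 (by positivity)).ne', ?_⟩
  have hle : ((a + 1)⁻¹ : ℝ≥0) * N (fun _ => 1) ≤ 1 := by
    rw [← ha, ← ENNReal.coe_mul, ENNReal.coe_le_one_iff, inv_mul_le_one₀ (by positivity)]
    exact le_add_of_nonneg_right zero_le_one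
  simpa only [mul_one] using hN.smul_mem_unitBall aestronglyMeasurable_const hle

end IsHomogeneousDefinite

theorem lintegral_enorm_le_kdualN {N : NormFn} {f : 𝕋 → ℂ} (hf : f ∈ unitBall N) (g : 𝕋 → ℂ) :
    ∫⁻ t, ‖f t * g t‖ₑ ∂μ ≤ kdualN N g :=
  le_iSup (fun f : unitBall N => ∫⁻ t, ‖f.1 t * g t‖ₑ ∂μ) ⟨f, hf⟩

theorem le_multN {N₁ N₂ : NormFn} {f : 𝕋 → ℂ} (hf : f ∈ unitBall N₁) (a : 𝕋 → ℂ) :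
    N₂ (fun t => a t * f t) ≤ multN N₁ N₂ a :=
  le_iSup (fun f : unitBall N₁ => N₂ fun t => a t * f.1 t) ⟨f, hf⟩

theorem prodN_le_mul {N₁ N₂ : NormFn} {f g h : 𝕋 → ℂ} (hf : AEStronglyMeasurable f μ)
    (hg : AEStronglyMeasurable g μ) (hh : h =ᵐ[μ] fun t => f t * g t) :
    prodN N₁ N₂ h ≤ N₁ f * N₂ g :=
  iInf_le _ (⟨(f, g), hf, hg, hh⟩ : {p : (𝕋 → ℂ) × (𝕋 → ℂ) // AEStronglyMeasurable p.1 μ ∧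
    AEStronglyMeasurable p.2 μ ∧ h =ᵐ[μ] fun t => p.1 t * p.2 t})

theorem isHomogeneousDefinite_kdualN (Y : BFS) : IsHomogeneousDefinite (kdualN Y.N) where
  smul_eq c g := by
    simp only [kdualN, ENNReal.mul_iSup]
    refine iSup_congr fun f => ?_
    rw [← lintegral_const_mul' _ _ enorm_ne_top]
    refine lintegral_congr fun t => ?_
    simp only [← enorm_eq_nnnorm, ← enorm_mul, mul_left_comm]
  ae_eq_zero g hg h0 := by
    obtain ⟨c, hc, hcY⟩ := Y.isHomogeneousDefinite.exists_const_mem_unitBall Y.const_finite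
    have hint := (lintegral_enorm_le_kdualN hcY g).trans h0.le
    rw [nonpos_iff_eq_zero, lintegral_eq_zero_iff' (hg.const_mul c).enorm] at hint
    filter_upwards [hint] with t ht
    simpa [hc] using ht

theorem isHomogeneousDefinite_multN (X Y : BFS) : IsHomogeneousDefinite (multN X.N Y.N) where
  smul_eq c a := by
    simp only [multN, ENNReal.mul_iSup, mul_assoc]
    exact iSup_congr fun f => Y.smul_eq c _
  ae_eq_zero a ha h0 := by
    obtain ⟨c, hc, hcX⟩ := X.isHomogeneousDefinite.exists_const_mem_unitBall X.const_finite
    have hzero := Y.norm_eq_zero _ (ha.mul_const c) (le_zero_iff.1 ((le_multN hcX a).trans h0.le))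
    filter_upwards [hzero] with t ht
    simpa [hc] using ht

theorem exists_unitBall_factorization {N₁ N₂ : NormFn} (h₁ : IsHomogeneousDefinite N₁)
    (h₂ : IsHomogeneousDefinite N₂) {h : 𝕋 → ℂ} {c : ℝ≥0} (hlt : prodN N₁ N₂ h < c) :
    ∃ x ∈ unitBall N₁, ∃ z ∈ unitBall N₂, h =ᵐ[μ] fun t => (c : ℂ) * (x t * z t) := by
  obtain ⟨⟨⟨p, q⟩, hp, hq, hpq⟩, hlt⟩ := iInf_lt_iff.1 hlt
  dsimp only at hp hq hpq hlt
  by_cases hzero : N₁ p = 0 ∨ N₂ q = 0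
  · refine ⟨_, h₁.zero_mem_unitBall, _, h₂.zero_mem_unitBall, ?_⟩
    rcases hzero with h0 | h0
    · filter_upwards [hpq, h₁.ae_eq_zero p hp h0] with t ht h0 using by simp [ht, h0]
    · filter_upwards [hpq, h₂.ae_eq_zero q hq h0] with t ht h0 using by simp [ht, h0]
  push Not at hzero
  have hp_top : N₁ p ≠ ⊤ := fun htop => by simp [htop, ENNReal.top_mul hzero.2] at hlt
  have hq_top : N₂ q ≠ ⊤ := fun htop => by simp [htop, ENNReal.mul_top hzero.1] at hlt
  lift N₁ p to ℝ≥0 using hp_top with a ha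
  lift N₂ q to ℝ≥0 using hq_top with b hb
  norm_cast at hlt hzero
  have hc : c ≠ 0 := (zero_le.trans_lt hlt).ne'
  refine ⟨_, h₁.smul_mem_unitBall hp (c := (a⁻¹ : ℝ≥0)) ?_,
    _, h₂.smul_mem_unitBall hq (c := (a / c : ℝ≥0)) ?_, ?_⟩
  · rw [← ha, ← ENNReal.coe_mul, inv_mul_cancel₀ hzero.1, ENNReal.coe_one]
  · rw [← hb, ← ENNReal.coe_mul, ENNReal.coe_le_one_iff, div_mul_eq_mul_div]
    exact div_le_one_of_le₀ hlt.le zero_le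
  · filter_upwards [hpq] with t ht
    have ha0 : (a : ℂ) ≠ 0 := mod_cast hzero.1
    have hc0 : (c : ℂ) ≠ 0 := mod_cast hc
    rw [ht]
    push_cast
    field_simp

theorem kdualN_multN_le_prodN (X Y : BFS) (g : 𝕋 → ℂ) :
    kdualN (multN X.N Y.N) g ≤ prodN X.N (kdualN Y.N) g := by
  refine le_of_forall_gt_imp_ge_of_dense fun c hc => ?_
  induction c with
  | top => exact le_top
  | coe c =>
    obtain ⟨x, hx, z, hz, hg⟩ :=
      exists_unitBall_factorization X.isHomogeneousDefinite (isHomogeneousDefinite_kdualN Y) hc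
    refine iSup_le fun ⟨a, ha⟩ => ?_
    have hax : (fun t => a t * x t) ∈ unitBall Y.N := ⟨ha.1.mul hx.1, (le_multN hx a).trans ha.2⟩
    calc ∫⁻ t, ‖a t * g t‖ₑ ∂μ = ∫⁻ t, c * ‖a t * x t * z t‖ₑ ∂μ := by
          refine lintegral_congr_ae ?_
          filter_upwards [hg] with t ht
          rw [ht, mul_left_comm, enorm_mul, ← mul_assoc (a t)]
          simp [enorm_eq_nnnorm]
      _ = c * ∫⁻ t, ‖a t * x t * z t‖ₑ ∂μ := lintegral_const_mul' _ _ ENNReal.coe_ne_top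
      _ ≤ c * 1 := by gcongr; exact (lintegral_enorm_le_kdualN hax z).trans hz.2
      _ = c := mul_one _

namespace BFS

variable (X : BFS)

theorem N_ofReal_mono {u v : 𝕋 → ℝ} (hu : AEMeasurable u μ) (h0 : ∀ᵐ t ∂μ, 0 ≤ u t)
    (huv : ∀ᵐ t ∂μ, u t ≤ v t) : X.N (fun t => (u t : ℂ)) ≤ X.N (fun t => (v t : ℂ)) := by
  refine X.ideal _ _ hu.complex_ofReal.aestronglyMeasurable ?_
  filter_upwards [h0, huv] with t h0 huv
  rwa [Complex.norm_real, Complex.norm_real, Real.norm_of_nonneg h0,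
    Real.norm_of_nonneg (h0.trans huv)]

theorem N_add_mul_le {u v : 𝕋 → ℂ} {R : ℝ≥0∞} (hu : X.N u ≤ R) (hv : X.N v ≤ R) {a b : ℝ}
    (ha : 0 ≤ a) (hb : 0 ≤ b) (hab : a + b = 1) : X.N (fun t => a * u t + b * v t) ≤ R :=
  calc X.N (fun t => a * u t + b * v t) ≤ ‖(a : ℂ)‖ₑ * X.N u + ‖(b : ℂ)‖ₑ * X.N v :=
        (X.add_le _ _).trans_eq (congrArg₂ (· + ·) (X.smul_eq _ _) (X.smul_eq _ _))
    _ ≤ ENNReal.ofReal a * R + ENNReal.ofReal b * R := by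
        rw [← ofReal_norm, ← ofReal_norm, Complex.norm_of_nonneg ha, Complex.norm_of_nonneg hb]
        gcongr
    _ = R := by rw [← add_mul, ← ENNReal.ofReal_add ha hb, hab, ENNReal.ofReal_one, one_mul]

end BFS

theorem coeFn_smul_add_smul {α : Type*} {m : MeasurableSpace α} {ν : Measure α} {p : ℝ≥0∞}
    (a b : ℝ) (v w : Lp ℝ p ν) : ∀ᵐ t ∂ν, (a • v + b • w) t = a * v t + b * w t := by
  filter_upwards [Lp.coeFn_add (a • v) (b • w), Lp.coeFn_smul a v, Lp.coeFn_smul b w] with t h hv hw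
  rw [h, Pi.add_apply, hv, hw]
  rfl

theorem monotone_iInf_add {α : Type*} [CompleteLattice α] (u : ℕ → α) :
    Monotone fun k => ⨅ n, u (n + k) := fun k l hkl =>
  le_iInf fun n => (iInf_le _ (n + (l - k))).trans_eq (by congr 1; omega)

theorem tendsto_iInf_add {α : Type*} [CompleteLinearOrder α] [TopologicalSpace α] [OrderTopology α]
    {u : ℕ → α} {a : α} (h : Tendsto u atTop (𝓝 a)) :
    Tendsto (fun k => ⨅ n, u (n + k)) atTop (𝓝 a) := by
  rw [← h.liminf_eq, liminf_eq_iSup_iInf_of_nat']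
  exact tendsto_atTop_iSup (monotone_iInf_add u)

theorem FatouN.le_of_tendsto {X : BFS} (hX : FatouN X.N) {f : ℕ → 𝕋 → ℂ} {g : 𝕋 → ℂ} {R : ℝ≥0∞}
    (hf : ∀ n, AEStronglyMeasurable (f n) μ) (hg : AEStronglyMeasurable g μ)
    (hlim : ∀ᵐ t ∂μ, Tendsto (fun n => ‖f n t‖) atTop (𝓝 ‖g t‖)) (hR : ∀ n, X.N (f n) ≤ R) :
    X.N g ≤ R := by
  let tail (k : ℕ) (t : 𝕋) : ℝ≥0∞ := ⨅ n, ‖f (n + k) t‖ₑ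
  have htail_le (k t) : tail k t ≤ ‖f k t‖ₑ := (iInf_le _ 0).trans_eq (by rw [zero_add])
  have htail_ne (k t) : tail k t ≠ ⊤ := ne_top_of_le_ne_top enorm_ne_top (htail_le k t)
  have hnorm (k t) : ‖((tail k t).toReal : ℂ)‖ = (tail k t).toReal := by
    rw [Complex.norm_real, Real.norm_of_nonneg ENNReal.toReal_nonneg]
  have hmeas (k) : AEStronglyMeasurable (fun t => ((tail k t).toReal : ℂ)) μ :=
    (AEMeasurable.iInf fun n =>
      (hf (n + k)).enorm).ennreal_toReal.complex_ofReal.aestronglyMeasurable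
  rw [hX _ g hmeas hg ?_]
  · refine iSup_le fun k => (X.ideal _ _ (hmeas k) (Eventually.of_forall fun t => ?_)).trans (hR k)
    rw [hnorm, ← toReal_enorm]
    exact ENNReal.toReal_mono enorm_ne_top (htail_le k t)
  · filter_upwards [hlim] with t ht
    simp only [hnorm]
    refine ⟨fun k l hkl =>
      ENNReal.toReal_mono (htail_ne l t) (monotone_iInf_add (fun n => ‖f n t‖ₑ) hkl), ?_⟩
    have henorm : Tendsto (fun n => ‖f n t‖ₑ) atTop (𝓝 ‖g t‖ₑ) := by
      simpa only [ofReal_norm] using ENNReal.tendsto_ofReal ht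
    rw [← toReal_enorm (g t)]
    exact (ENNReal.tendsto_toReal enorm_ne_top).comp (tendsto_iInf_add henorm)

/-- The reciprocals `s = 1 / (1 + u)` of the shifted elements `u ≥ 0` of the ball of radius `R` of
`X`, as a subset of `L²`. Passing from `u` to `s` makes the ball bounded in `L²` and turns the
integrals `∫ w / (1 + u)` into inner products. -/
def reciprocalBall (X : BFS) (R : ℝ≥0∞) : Set (Lp ℝ 2 μ) :=
  {s | (∀ᵐ t ∂μ, s t ∈ Set.Ioc 0 1) ∧ X.N (fun t => (((s t)⁻¹ - 1 : ℝ) : ℂ)) ≤ R}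

theorem exists_mem_reciprocalBall {X : BFS} {R : ℝ≥0∞} {u : 𝕋 → ℂ} (hu : AEStronglyMeasurable u μ)
    (huR : X.N u ≤ R) : ∃ s ∈ reciprocalBall X R, ∀ᵐ t ∂μ, s t = (1 + ‖u t‖)⁻¹ := by
  have hmem (t : 𝕋) : (1 + ‖u t‖)⁻¹ ∈ Set.Ioc (0 : ℝ) 1 :=
    ⟨by positivity, inv_le_one_of_one_le₀ (le_add_of_nonneg_right (norm_nonneg _))⟩
  have hLp : MemLp (fun t => (1 + ‖u t‖)⁻¹) 2 μ := by
    refine MemLp.of_bound (hu.norm.aemeasurable.const_add 1).inv.aestronglyMeasurable 1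
      (Eventually.of_forall fun t => ?_)
    rw [Real.norm_of_nonneg (hmem t).1.le]
    exact (hmem t).2
  refine ⟨hLp.toLp, ⟨?_, ?_⟩, hLp.coeFn_toLp⟩
  · filter_upwards [hLp.coeFn_toLp] with t ht using ht ▸ hmem t
  · refine (X.ideal u _ ?_ ?_).trans huR
    · exact ((Lp.aestronglyMeasurable _).aemeasurable.inv.sub_const
        1).complex_ofReal.aestronglyMeasurable
    · filter_upwards [hLp.coeFn_toLp] with t ht
      simp [ht]

theorem isBounded_reciprocalBall (X : BFS) (R : ℝ≥0∞) :
    Bornology.IsBounded (reciprocalBall X R) := by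
  refine isBounded_iff_forall_norm_le.2 ⟨1, fun s hs => ?_⟩
  refine (Lp.norm_le_of_ae_bound zero_le_one ?_).trans_eq (by simp [measureUnivNNReal])
  filter_upwards [hs.1] with t ht
  rw [Real.norm_of_nonneg ht.1.le]
  exact ht.2

theorem inv_add_mul_sub_one_le {r s a b : ℝ} (hr : 0 < r) (hs : 0 < s) (ha : 0 ≤ a) (hb : 0 ≤ b)
    (hab : a + b = 1) : (a * r + b * s)⁻¹ - 1 ≤ a * (r⁻¹ - 1) + b * (s⁻¹ - 1) := by
  have hconv := (convexOn_zpow (-1)).2 (Set.mem_Ioi.2 hr) (Set.mem_Ioi.2 hs) ha hb hab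
  simp only [smul_eq_mul, zpow_neg_one] at hconv
  linarith

theorem convex_reciprocalBall (X : BFS) (R : ℝ≥0∞) : Convex ℝ (reciprocalBall X R) := by
  rintro r ⟨hr, hrR⟩ s ⟨hs, hsR⟩ a b ha hb hab
  have hcoe := coeFn_smul_add_smul a b r s
  have hIoc : ∀ᵐ t ∂μ, (a • r + b • s) t ∈ Set.Ioc 0 1 := by
    filter_upwards [hcoe, hr, hs] with t h hr hs
    rw [h]
    exact convex_Ioc 0 1 hr hs ha hb hab
  refine ⟨hIoc, ?_⟩
  calc X.N (fun t => (((((a • r + b • s : Lp ℝ 2 μ) t)⁻¹ - 1 : ℝ)) : ℂ))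
      ≤ X.N (fun t => ((a * ((r t)⁻¹ - 1) + b * ((s t)⁻¹ - 1) : ℝ) : ℂ)) := by
        refine X.N_ofReal_mono ((Lp.aestronglyMeasurable _).aemeasurable.inv.sub_const 1) ?_ ?_
        · filter_upwards [hIoc] with t ht using sub_nonneg.2 (one_le_inv_iff₀.2 ht)
        · filter_upwards [hcoe, hr, hs] with t h hr hs
          exact h ▸ inv_add_mul_sub_one_le hr.1 hs.1 ha hb hab
    _ ≤ R := by
        simp only [Complex.ofReal_add, Complex.ofReal_mul]
        exact X.N_add_mul_le hrR hsR ha hb hab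

theorem inv_max_sub_one_nonneg {s : ℝ} (hs : s ≤ 1) (k : ℕ) :
    0 ≤ (max s (k + 1 : ℝ)⁻¹)⁻¹ - 1 :=
  sub_nonneg.2 (one_le_inv_iff₀.2 ⟨lt_max_of_lt_right (by positivity),
    max_le hs (inv_le_one_of_one_le₀ (le_add_of_nonneg_left k.cast_nonneg))⟩)

theorem BFS.ae_pos_of_inv_max_sub_one_le (X : BFS) {R : ℝ≥0∞} (hR : R ≠ ⊤) {r : 𝕋 → ℝ}
    (hr : AEMeasurable r μ) (hr1 : ∀ᵐ t ∂μ, r t ≤ 1)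
    (hrR : ∀ k : ℕ, X.N (fun t => (((max (r t) (k + 1 : ℝ)⁻¹)⁻¹ - 1 : ℝ) : ℂ)) ≤ R) :
    ∀ᵐ t ∂μ, 0 < r t := by
  let χ : 𝕋 → ℝ := {t | r t ≤ 0}.indicator 1
  have hχ : AEMeasurable χ μ :=
    aemeasurable_const.indicator₀ (nullMeasurableSet_le hr aemeasurable_const)
  have hle (k : ℕ) : k * X.N (fun t => (χ t : ℂ)) ≤ R := by
    calc k * X.N (fun t => (χ t : ℂ)) = X.N (fun t => ((k * χ t : ℝ) : ℂ)) := by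
          simpa [enorm_eq_nnnorm] using (X.smul_eq k fun t => (χ t : ℂ)).symm
      _ ≤ X.N (fun t => (((max (r t) (k + 1 : ℝ)⁻¹)⁻¹ - 1 : ℝ) : ℂ)) := by
          refine X.N_ofReal_mono (hχ.const_mul _) (Eventually.of_forall fun t =>
            mul_nonneg k.cast_nonneg (Set.indicator_nonneg (fun _ _ => zero_le_one) t)) ?_
          filter_upwards [hr1] with t ht
          by_cases h0 : r t ≤ 0
          · have hmax : max (r t) (k + 1 : ℝ)⁻¹ = (k + 1 : ℝ)⁻¹ :=
              max_eq_right (h0.trans (by positivity))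
            simp [χ, h0, hmax]
          · simpa [χ, h0] using inv_max_sub_one_nonneg ht k
      _ ≤ R := hrR k
  have hzero : X.N (fun t => (χ t : ℂ)) = 0 := by
    by_contra h0
    obtain ⟨k, hk⟩ := ENNReal.exists_nat_mul_gt h0 hR
    exact hk.not_ge (hle k)
  filter_upwards [X.norm_eq_zero _ hχ.complex_ofReal.aestronglyMeasurable hzero] with t ht
  by_contra! h0
  simp [χ, h0] at ht

theorem FatouN.ae_pos_of_tendsto {X : BFS} (hX : FatouN X.N) {R : ℝ≥0∞} (hR : R ≠ ⊤)
    {s : ℕ → 𝕋 → ℝ} {r : 𝕋 → ℝ} (hs : ∀ n, AEMeasurable (s n) μ) (hr : AEMeasurable r μ)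
    (hs01 : ∀ n, ∀ᵐ t ∂μ, s n t ∈ Set.Ioc 0 1)
    (hsR : ∀ n, X.N (fun t => (((s n t)⁻¹ - 1 : ℝ) : ℂ)) ≤ R)
    (hlim : ∀ᵐ t ∂μ, Tendsto (fun n => s n t) atTop (𝓝 (r t))) : ∀ᵐ t ∂μ, 0 < r t := by
  have hr1 : ∀ᵐ t ∂μ, r t ≤ 1 := by
    filter_upwards [hlim, ae_all_iff.2 hs01] with t ht h01
    exact le_of_tendsto' ht fun n => (h01 n).2
  -- Where `r` vanishes the reciprocals `(s n)⁻¹` blow up and have no pointwise limit, so the Fatou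
  -- property is applied to their truncations.
  refine X.ae_pos_of_inv_max_sub_one_le hR hr hr1 fun k => ?_
  have hmeas {v : 𝕋 → ℝ} (hv : AEMeasurable v μ) :
      AEMeasurable (fun t => (max (v t) (k + 1 : ℝ)⁻¹)⁻¹ - 1) μ :=
    (hv.max aemeasurable_const).inv.sub_const 1
  refine hX.le_of_tendsto (f := fun n t => (((max (s n t) (k + 1 : ℝ)⁻¹)⁻¹ - 1 : ℝ) : ℂ))
    (fun n => (hmeas (hs n)).complex_ofReal.aestronglyMeasurable)
    (hmeas hr).complex_ofReal.aestronglyMeasurable ?_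
    (fun n => (X.N_ofReal_mono (hmeas (hs n)) ?_ ?_).trans (hsR n))
  · filter_upwards [hlim] with t ht
    have hne : max (r t) (k + 1 : ℝ)⁻¹ ≠ 0 := (lt_max_of_lt_right (by positivity)).ne'
    exact ((Complex.continuous_ofReal.tendsto _).comp
      (((ht.max tendsto_const_nhds).inv₀ hne).sub_const 1)).norm
  · filter_upwards [hs01 n] with t ht using inv_max_sub_one_nonneg ht.2 k
  · filter_upwards [hs01 n] with t ht
    exact sub_le_sub_right (inv_anti₀ ht.1 (le_max_left _ _)) 1

theorem isClosed_reciprocalBall {X : BFS} (hX : FatouN X.N) {R : ℝ≥0∞} (hR : R ≠ ⊤) :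
    IsClosed (reciprocalBall X R) := by
  refine isSeqClosed_iff_isClosed.1 fun s r hs hlim => ?_
  obtain ⟨ns, -, hns⟩ := (tendstoInMeasure_of_tendsto_Lp hlim).exists_seq_tendsto_ae
  have hmeas (s : Lp ℝ 2 μ) : AEMeasurable s μ := (Lp.aestronglyMeasurable s).aemeasurable
  have hpos : ∀ᵐ t ∂μ, 0 < r t :=
    hX.ae_pos_of_tendsto hR (fun n => hmeas _) (hmeas r) (fun n => (hs (ns n)).1)
      (fun n => (hs (ns n)).2) hns
  refine ⟨?_, hX.le_of_tendsto (f := fun n t => (((s (ns n) t)⁻¹ - 1 : ℝ) : ℂ)) (fun n => ?_) ?_ ?_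
    fun n => (hs (ns n)).2⟩
  · filter_upwards [hpos, hns, ae_all_iff.2 fun n => (hs (ns n)).1] with t h0 ht h1
    exact ⟨h0, le_of_tendsto' ht fun n => (h1 n).2⟩
  · exact ((hmeas _).inv.sub_const 1).complex_ofReal.aestronglyMeasurable
  · exact ((hmeas r).inv.sub_const 1).complex_ofReal.aestronglyMeasurable
  · filter_upwards [hpos, hns] with t h0 ht
    exact ((Complex.continuous_ofReal.tendsto _).comp ((ht.inv₀ h0.ne').sub_const 1)).norm

theorem ofReal_inner_eq_lintegral {α : Type*} {m : MeasurableSpace α} {ν : Measure α}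
    {w s : Lp ℝ 2 ν} (hw : ∀ᵐ t ∂ν, 0 ≤ w t) (hs : ∀ᵐ t ∂ν, 0 ≤ s t) :
    ENNReal.ofReal (inner ℝ w s) = ∫⁻ t, ENNReal.ofReal (w t) * ENNReal.ofReal (s t) ∂ν := by
  rw [L2.inner_def, ofReal_integral_eq_lintegral_ofReal (L2.integrable_inner w s)]
  · refine lintegral_congr_ae ?_
    filter_upwards [hw] with t hw
    rw [← ENNReal.ofReal_mul hw, real_inner_comm]
    rfl
  · filter_upwards [hw, hs] with t hw hs using mul_nonneg hs hw

theorem lintegral_ofReal_mul_le_of_forall_min {α : Type*} {m : MeasurableSpace α} {ν : Measure α}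
    {f : α → ℝ} {φ : α → ℝ≥0∞} (hf : AEMeasurable f ν) (hφ : AEMeasurable φ ν) {C : ℝ≥0∞}
    (h : ∀ n : ℕ, ∫⁻ t, ENNReal.ofReal (min (f t) n) * φ t ∂ν ≤ C) :
    ∫⁻ t, ENNReal.ofReal (f t) * φ t ∂ν ≤ C := by
  refine le_of_tendsto' (lintegral_tendsto_of_tendsto_of_monotone
    (fun n => (hf.min aemeasurable_const).ennreal_ofReal.mul hφ)
    (Eventually.of_forall fun t k l hkl => ?_) (Eventually.of_forall fun t => ?_)) h
  · exact mul_le_mul_left (ENNReal.ofReal_le_ofReal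
      (min_le_min_left _ (Nat.cast_le.2 hkl))) _
  · refine tendsto_atTop_of_eventually_const (i₀ := ⌈f t⌉₊) fun n hn => ?_
    rw [Pi.mul_apply, min_eq_left (Nat.ceil_le.1 hn)]

/-- The nonnegative minorants in `L²` of the functions `|g y|`, for `y` in the unit ball of `Y`.
Unlike the functions `|g y|` themselves they are square-integrable and form a convex set, as the
minimax argument requires. -/
def productMinorants (Y : BFS) (g : 𝕋 → ℂ) : Set (Lp ℝ 2 μ) :=
  {w | (∀ᵐ t ∂μ, 0 ≤ w t) ∧ ∃ y ∈ unitBall Y.N, ∀ᵐ t ∂μ, w t ≤ ‖g t * y t‖}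

theorem convex_productMinorants (Y : BFS) (g : 𝕋 → ℂ) : Convex ℝ (productMinorants Y g) := by
  rintro v ⟨hv, x, hx, hvx⟩ w ⟨hw, y, hy, hwy⟩ a b ha hb hab
  have hcoe := coeFn_smul_add_smul a b v w
  refine ⟨?_, fun t => ((a * ‖x t‖ + b * ‖y t‖ : ℝ) : ℂ), ⟨?_, ?_⟩, ?_⟩
  · filter_upwards [hcoe, hv, hw] with t h hv hw
    rw [h]
    positivity
  · exact ((hx.1.norm.aemeasurable.const_mul a).add
      (hy.1.norm.aemeasurable.const_mul b)).complex_ofReal.aestronglyMeasurable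
  · have hnorm {z : 𝕋 → ℂ} (hz : z ∈ unitBall Y.N) : Y.N (fun t => (‖z t‖ : ℂ)) ≤ 1 :=
      (Y.ideal z _ hz.1.norm.aemeasurable.complex_ofReal.aestronglyMeasurable
        (by simp)).trans hz.2
    simp only [Complex.ofReal_add, Complex.ofReal_mul]
    exact Y.N_add_mul_le (hnorm hx) (hnorm hy) ha hb hab
  · filter_upwards [hcoe, hvx, hwy] with t h hvx hwy
    rw [norm_mul] at hvx hwy
    rw [h, norm_mul, Complex.norm_of_nonneg (by positivity), mul_add, mul_left_comm,
      mul_left_comm _ b]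
    gcongr

theorem exists_mem_productMinorants_eq_min {Y : BFS} {g y : 𝕋 → ℂ} (hg : AEStronglyMeasurable g μ)
    (hy : y ∈ unitBall Y.N) (n : ℕ) :
    ∃ w ∈ productMinorants Y g, ∀ᵐ t ∂μ, w t = min ‖g t * y t‖ n := by
  have hLp : MemLp (fun t => min ‖g t * y t‖ n) 2 μ := by
    refine MemLp.of_bound ((hg.mul hy.1).norm.inf aestronglyMeasurable_const) n
      (Eventually.of_forall fun t => ?_)
    rw [Real.norm_of_nonneg (by positivity)]
    exact min_le_right _ _
  refine ⟨hLp.toLp, ⟨?_, y, hy, ?_⟩, hLp.coeFn_toLp⟩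
  · filter_upwards [hLp.coeFn_toLp] with t ht
    rw [ht]
    positivity
  · filter_upwards [hLp.coeFn_toLp] with t ht using ht.trans_le (min_le_left _ _)

theorem exists_forall_lintegral_mul_le {S : Set (Lp ℝ 2 μ)} (hne : S.Nonempty) (hS : Convex ℝ S)
    (hclosed : IsClosed S) (hbdd : Bornology.IsBounded S) (hnonneg : ∀ s ∈ S, ∀ᵐ t ∂μ, 0 ≤ s t)
    (Y : BFS) {g : 𝕋 → ℂ} (hg : AEStronglyMeasurable g μ) {C : ℝ≥0}
    (h : ∀ y ∈ unitBall Y.N, ∃ s ∈ S, ∫⁻ t, ‖g t * y t‖ₑ * ENNReal.ofReal (s t) ∂μ ≤ C) :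
    ∃ s ∈ S, ∀ y ∈ unitBall Y.N, ∫⁻ t, ‖g t * y t‖ₑ * ENNReal.ofReal (s t) ∂μ ≤ C := by
  obtain ⟨s, hs, hsC⟩ : ∃ s ∈ S, ∀ w ∈ productMinorants Y g, inner ℝ w s ≤ C := by
    refine exists_forall_inner_le hne hS hclosed hbdd (convex_productMinorants Y g) ?_
    rintro w ⟨hw, y, hy, hwy⟩
    obtain ⟨s, hs, hsC⟩ := h y hy
    refine ⟨s, hs, ?_⟩
    rw [← ENNReal.ofReal_le_ofReal_iff C.coe_nonneg, ofReal_inner_eq_lintegral hw (hnonneg s hs),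
      ENNReal.ofReal_coe_nnreal]
    refine (lintegral_mono_ae ?_).trans hsC
    filter_upwards [hwy] with t ht
    rw [← ofReal_norm]
    gcongr
  refine ⟨s, hs, fun y hy => ?_⟩
  simp only [← ofReal_norm]
  refine lintegral_ofReal_mul_le_of_forall_min (hg.mul hy.1).norm.aemeasurable
    (Lp.aestronglyMeasurable s).aemeasurable.ennreal_ofReal fun n => ?_
  obtain ⟨w, hw, hwn⟩ := exists_mem_productMinorants_eq_min hg hy n
  calc ∫⁻ t, ENNReal.ofReal (min ‖g t * y t‖ n) * ENNReal.ofReal (s t) ∂μ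
      = ∫⁻ t, ENNReal.ofReal (w t) * ENNReal.ofReal (s t) ∂μ := by
        refine lintegral_congr_ae ?_
        filter_upwards [hwn] with t ht using by rw [ht]
    _ = ENNReal.ofReal (inner ℝ w s) := (ofReal_inner_eq_lintegral hw.1 (hnonneg s hs)).symm
    _ ≤ C := by
        rw [← ENNReal.ofReal_coe_nnreal]
        exact ENNReal.ofReal_le_ofReal (hsC w hw)

theorem exists_mem_reciprocalBall_lintegral_le {X : BFS} {N : NormFn}
    (hN : IsHomogeneousDefinite N) (g : 𝕋 → ℂ) {y : 𝕋 → ℂ} {c R : ℝ≥0} (hR : 0 < R)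
    (hy : prodN X.N N y < c) :
    ∃ s ∈ reciprocalBall X R,
      ∫⁻ t, ‖g t * y t‖ₑ * ENNReal.ofReal (s t) ∂μ ≤ (c / R : ℝ≥0) * kdualN N g := by
  obtain ⟨x, hx, z, hz, hy⟩ := exists_unitBall_factorization X.isHomogeneousDefinite hN hy
  have hxR : X.N (fun t => (R : ℂ) * x t) ≤ R := by
    simpa [X.smul_eq] using mul_le_mul_right hx.2 (R : ℝ≥0∞)
  obtain ⟨s, hs, hsx⟩ := exists_mem_reciprocalBall (hx.1.const_mul _) hxR
  refine ⟨s, hs, ?_⟩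
  calc ∫⁻ t, ‖g t * y t‖ₑ * ENNReal.ofReal (s t) ∂μ
      ≤ ∫⁻ t, (c / R : ℝ≥0) * ‖z t * g t‖ₑ ∂μ := by
        refine lintegral_mono_ae ?_
        filter_upwards [hy, hsx] with t hy hs
        have hxt : ‖x t‖ * (1 + R * ‖x t‖)⁻¹ ≤ (R : ℝ)⁻¹ := by
          rw [← div_eq_mul_inv, div_le_iff₀ (by positivity)]
          field_simp
          linarith
        rw [← ofReal_norm, ← ofReal_norm, ← ENNReal.ofReal_mul (norm_nonneg _),
          ← ENNReal.ofReal_coe_nnreal, ← ENNReal.ofReal_mul (NNReal.coe_nonneg _)]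
        refine ENNReal.ofReal_le_ofReal ?_
        calc ‖g t * y t‖ * s t
            = c * ‖z t * g t‖ * (‖x t‖ * (1 + R * ‖x t‖)⁻¹) := by
              simp only [hy, hs, norm_mul, Complex.norm_real, NNReal.norm_eq]
              ring
          _ ≤ c * ‖z t * g t‖ * (R : ℝ)⁻¹ := by gcongr
          _ = (c / R : ℝ≥0) * ‖z t * g t‖ := by
              push_cast
              ring
    _ = (c / R : ℝ≥0) * ∫⁻ t, ‖z t * g t‖ₑ ∂μ := lintegral_const_mul' _ _ ENNReal.coe_ne_top
    _ ≤ (c / R : ℝ≥0) * kdualN N g := by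
        gcongr
        exact lintegral_enorm_le_kdualN hz g

theorem prodN_kdualN_le_of_mem_reciprocalBall {X Y : BFS} {R C : ℝ≥0∞} {s : Lp ℝ 2 μ}
    (hs : s ∈ reciprocalBall X R) {g : 𝕋 → ℂ} (hg : AEStronglyMeasurable g μ)
    (h : ∀ y ∈ unitBall Y.N, ∫⁻ t, ‖g t * y t‖ₑ * ENNReal.ofReal (s t) ∂μ ≤ C) :
    prodN X.N (kdualN Y.N) g ≤ (X.N (fun _ => 1) + R) * C := by
  have hsm : AEMeasurable s μ := (Lp.aestronglyMeasurable s).aemeasurable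
  have hinv : X.N (fun t => ((s t : ℂ))⁻¹) ≤ X.N (fun _ => 1) + R :=
    calc X.N (fun t => ((s t : ℂ))⁻¹)
        = X.N ((fun _ => 1) + fun t => (((s t)⁻¹ - 1 : ℝ) : ℂ)) := by
          congr 1
          ext t
          simp
      _ ≤ X.N (fun _ => 1) + R := (X.add_le _ _).trans (by gcongr; exact hs.2)
  have hdual : kdualN Y.N (fun t => (s t : ℂ) * g t) ≤ C := by
    refine iSup_le fun ⟨y, hy⟩ => (lintegral_congr_ae ?_).trans_le (h y hy)
    filter_upwards [hs.1] with t ht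
    rw [← enorm_eq_nnnorm, mul_left_comm, enorm_mul, ← ofReal_norm,
      Complex.norm_of_nonneg ht.1.le, mul_comm, mul_comm (y t)]
  refine (prodN_le_mul hsm.complex_ofReal.inv.aestronglyMeasurable
    (hsm.complex_ofReal.aestronglyMeasurable.mul hg) ?_).trans (mul_le_mul' hinv hdual)
  filter_upwards [hs.1] with t ht
  exact (inv_mul_cancel_left₀ (Complex.ofReal_ne_zero.2 ht.1.ne') (g t)).symm

theorem prodN_kdualN_le_add_mul {X Y : BFS} (hX : FatouN X.N) {N : NormFn}
    (hN : IsHomogeneousDefinite N) {c R : ℝ≥0} (hR : 0 < R)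
    (hfact : ∀ y ∈ unitBall Y.N, prodN X.N N y < c) {g : 𝕋 → ℂ}
    (hg : AEStronglyMeasurable g μ) (hg_top : kdualN N g ≠ ⊤) :
    prodN X.N (kdualN Y.N) g ≤ (X.N (fun _ => 1) + R) * ((c / R : ℝ≥0) * kdualN N g) := by
  lift kdualN N g to ℝ≥0 using hg_top with D hD
  obtain ⟨s₀, hs₀, -⟩ := exists_mem_reciprocalBall (X := X) (R := R)
    aestronglyMeasurable_const (X.isHomogeneousDefinite.apply_zero.trans_le zero_le)
  obtain ⟨s, hs, hsC⟩ := exists_forall_lintegral_mul_le ⟨s₀, hs₀⟩ (convex_reciprocalBall X R)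
    (isClosed_reciprocalBall hX ENNReal.coe_ne_top) (isBounded_reciprocalBall X R)
    (fun s hs => hs.1.mono fun t ht => ht.1.le) Y hg (C := c / R * D) fun y hy => by
      simpa [hD] using exists_mem_reciprocalBall_lintegral_le hN g hR (hfact y hy)
  simpa using prodN_kdualN_le_of_mem_reciprocalBall hs hg hsC

theorem prodN_kdualN_le_mul {X Y : BFS} (hX : FatouN X.N) {N : NormFn}
    (hN : IsHomogeneousDefinite N) {c : ℝ≥0} (hfact : ∀ y ∈ unitBall Y.N, prodN X.N N y ≤ c)
    {g : 𝕋 → ℂ} (hg : AEStronglyMeasurable g μ) (hg_top : kdualN N g ≠ ⊤) :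
    prodN X.N (kdualN Y.N) g ≤ c * kdualN N g := by
  have hle {R : ℝ≥0} (hR : 0 < R) :
      prodN X.N (kdualN Y.N) g ≤ (X.N (fun _ => 1) + R) * (((c + R⁻¹) / R : ℝ≥0) * kdualN N g) :=
    prodN_kdualN_le_add_mul hX hN hR (fun y hy => (hfact y hy).trans_lt
      (ENNReal.coe_lt_coe.2 (lt_add_of_pos_right c (inv_pos.2 hR)))) hg hg_top
  lift kdualN N g to ℝ≥0 using hg_top with D
  lift X.N (fun _ => 1) to ℝ≥0 using X.const_finite.ne with A
  have hlim : Tendsto (fun R : ℝ≥0 => (A * R⁻¹ + 1) * ((c + R⁻¹) * D)) atTop (𝓝 (c * D)) := by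
    simpa using ((tendsto_inv_atTop_zero.const_mul A).add_const 1).mul
      ((tendsto_inv_atTop_zero.const_add c).mul_const D)
  rw [← ENNReal.coe_mul]
  refine ge_of_tendsto (ENNReal.tendsto_coe.2 hlim) ?_
  filter_upwards [eventually_gt_atTop 0] with R hR
  refine (hle hR).trans_eq ?_
  norm_cast
  field_simp

theorem cancellation_lemma_general (X Y : BFS) (hFX : FatouN X.N) {c : ℝ≥0}
    (hfact : ∀ h, AEStronglyMeasurable h μ → prodN X.N (multN X.N Y.N) h ≤ c * Y.N h)
    {g : 𝕋 → ℂ} (hg : AEStronglyMeasurable g μ) :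
    (c : ℝ≥0∞)⁻¹ * prodN X.N (kdualN Y.N) g ≤ kdualN (multN X.N Y.N) g ∧
      kdualN (multN X.N Y.N) g ≤ prodN X.N (kdualN Y.N) g := by
  refine ⟨?_, kdualN_multN_le_prodN X Y g⟩
  by_cases hg_top : kdualN (multN X.N Y.N) g = ⊤
  · exact hg_top ▸ le_top
  rw [mul_comm, ← div_eq_mul_inv]
  refine ENNReal.div_le_of_le_mul' (prodN_kdualN_le_mul hFX (isHomogeneousDefinite_multN X Y)
    (fun y hy => ?_) hg hg_top)
  calc prodN X.N (multN X.N Y.N) y ≤ c * Y.N y := hfact y hy.1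
    _ ≤ c * 1 := by gcongr; exact hy.2
    _ = c := mul_one _

/-- **Cancellation lemma.** Let `X, Y` be rearrangement-invariant Banach
function spaces over `𝕋` with the Fatou property. If `X` factorizes `Y`, i.e.
`X ⊙ M(X,Y) = Y` (with equivalence of norms), then `M(X,Y)' = X ⊙ Y'`
(with equivalence of norms). -/
theorem cancellation_lemma (X Y : BFS) (hriX : RearrInvN X.N) (hriY : RearrInvN Y.N)
    (hFX : FatouN X.N) (hFY : FatouN Y.N)
    (c₁ c₂ : ℝ≥0∞) (hc₁ : 0 < c₁) (hc₂ : c₂ < ⊤)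
    (hfact₁ : ∀ h, c₁ * Y.N h ≤ prodN X.N (multN X.N Y.N) h)
    (hfact₂ : ∀ h, prodN X.N (multN X.N Y.N) h ≤ c₂ * Y.N h) :
    ∃ d₁ d₂ : ℝ≥0∞, 0 < d₁ ∧ d₂ < ⊤ ∧
      ∀ g, AEStronglyMeasurable g μ →
        d₁ * prodN X.N (kdualN Y.N) g ≤ kdualN (multN X.N Y.N) g ∧
        kdualN (multN X.N Y.N) g ≤ d₂ * prodN X.N (kdualN Y.N) g := by
  lift c₂ to ℝ≥0 using hc₂.ne
  refine ⟨(c₂ : ℝ≥0∞)⁻¹, 1, by simp, ENNReal.one_lt_top, fun g hg => ?_⟩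
  rw [one_mul]
  exact cancellation_lemma_general X Y hFX (fun h _ => hfact₂ h) hg

end
end

section
/- Let X = L^{p_1,1} and Y = L^{p,∞} on 𝕋 with 1 < p < p_1 < ∞. Then the pointwise product X ⊙ Y' equals the Lorentz space L^{p_2,1/2}, where Y' = L^{p',1} (p' the conjugate exponent of p) and 1/p_2 = 1 + 1/p_1 − 1/p < 1; in particular X ⊙ Y' has nontrivial Boyd indices (β_X < α_Y holds), while X does not factorize Y, i.e., X ⊙ M(X,Y) ≠ Y. -/
open MeasureTheory Filter Topology ComplexConjugate
open scoped ENNReal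

noncomputable section

/-!
Up to an equivalent quasinorm, `‖f‖_{p,q}` is the `L^q(ds/s)` norm of `s ^ (1/p) * f*(s)`. Together
with `(gk)*(2s) ≤ g*(s) k*(s)`, Hölder's inequality for `ds/s` gives
`L^{p₁,1} ⊙ L^{p₂,1} ⊆ L^{p,1/2}` for `1/p = 1/p₁ + 1/p₂`. Conversely, `h ∈ L^{p,1/2}` is factored
by splitting it over its dyadic level sets and distributing each level between the two factors
with weights that are powers of the measure of the level set. The Boyd indices can be read off
from the order of growth of the dilation norms, which is stable under equivalence.

Testing a multiplier `m` from `L^{p₁,1}` to `L^{p,∞}` on indicators of its level sets shows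
`m ∈ L^{r,∞}` with `1/r = 1/p - 1/p₁`. Hence `X ⊙ M(X,Y) ⊆ L^{p,1}` by Hölder's inequality again,
and the function `θ ^ (-1/p)` of `Y = L^{p,∞}` is missed.
-/

/-- The dilation-invariant measure `ds/s` on `(0, ∞)`: the `L^{p,q}` quasinorm of `f` is the `L^q`
norm of `s ^ (1 / p) * f*(s)` with respect to it. -/
def logMeasure : Measure ℝ :=
  (volume.restrict (Set.Ioi 0)).withDensity fun s => (ENNReal.ofReal s)⁻¹

instance : SFinite logMeasure :=
  inferInstanceAs (SFinite (Measure.withDensity _ _))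

lemma ae_logMeasure_pos : ∀ᵐ s ∂logMeasure, 0 < s :=
  (withDensity_absolutelyContinuous _ _).ae_le (ae_restrict_mem measurableSet_Ioi)

lemma lintegral_logMeasure (F : ℝ → ℝ≥0∞) :
    ∫⁻ s, F s ∂logMeasure = ∫⁻ s in Set.Ioi 0, F s / ENNReal.ofReal s := by
  have hfin : ∀ᵐ s ∂volume.restrict (Set.Ioi (0 : ℝ)), (ENNReal.ofReal s)⁻¹ < ⊤ := by
    filter_upwards [ae_restrict_mem measurableSet_Ioi] with s hs
    exact ENNReal.inv_lt_top.2 (ENNReal.ofReal_pos.2 hs)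
  rw [logMeasure, lintegral_withDensity_eq_lintegral_mul_non_measurable _ (by fun_prop) hfin]
  simp only [Pi.mul_apply, div_eq_mul_inv, mul_comm]

lemma logMeasure_apply {A : Set ℝ} (hA : MeasurableSet A) :
    logMeasure A = ∫⁻ s in A ∩ Set.Ioi 0, (ENNReal.ofReal s)⁻¹ := by
  rw [logMeasure, withDensity_apply _ hA, Measure.restrict_restrict hA]

lemma lintegral_comp_mul_left_logMeasure {r : ℝ} (hr : 0 < r) (F : ℝ → ℝ≥0∞) :
    ∫⁻ s, F (r * s) ∂logMeasure = ∫⁻ s, F s ∂logMeasure := by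
  have himage : (fun s => r * s) '' Set.Ioi 0 = Set.Ioi 0 := by
    rw [Set.image_mul_left_Ioi hr, mul_zero]
  have hderiv : ∀ s ∈ Set.Ioi (0 : ℝ), HasDerivWithinAt (fun s => r * s) r (Set.Ioi 0) s :=
    fun s _ => by simpa using ((hasDerivAt_id s).const_mul r).hasDerivWithinAt
  rw [lintegral_logMeasure, lintegral_logMeasure]
  conv_rhs => rw [← himage, lintegral_image_eq_lintegral_abs_deriv_mul measurableSet_Ioi hderiv
    (mul_right_injective₀ hr.ne').injOn]
  refine setLIntegral_congr_fun measurableSet_Ioi fun s _ => ?_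
  rw [abs_of_pos hr, ENNReal.ofReal_mul hr.le, ← mul_div_assoc,
    ENNReal.mul_div_mul_left _ _ (ENNReal.ofReal_pos.2 hr).ne' ENNReal.ofReal_ne_top]

lemma lintegral_Ioo_rpow {y c : ℝ} (hy : 0 ≤ y) (hc : 0 < c) :
    ∫⁻ s in Set.Ioo 0 y, ENNReal.ofReal (s ^ (c - 1)) = ENNReal.ofReal (y ^ c / c) := by
  have hint : IntegrableOn (fun s : ℝ => s ^ (c - 1)) (Set.Ioo 0 y) :=
    (intervalIntegrable_iff_integrableOn_Ioo_of_le hy).1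
      (intervalIntegral.intervalIntegrable_rpow' (by linarith))
  rw [← ofReal_integral_eq_lintegral_ofReal hint, ← integral_Ioc_eq_integral_Ioo,
    ← intervalIntegral.integral_of_le hy, integral_rpow (Or.inl (by linarith)), sub_add_cancel,
    Real.zero_rpow hc.ne', sub_zero]
  filter_upwards [ae_restrict_mem measurableSet_Ioo] with s hs
  exact Real.rpow_nonneg hs.1.le _

lemma lintegral_rpow_logMeasure_of_ne_top {y : ℝ≥0∞} (hy : y ≠ ⊤) {c : ℝ} (hc : 0 < c) :
    ∫⁻ s, (if ENNReal.ofReal s < y then ENNReal.ofReal (s ^ c) else 0) ∂logMeasure =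
      ENNReal.ofReal (1 / c) * y ^ c := by
  lift y to NNReal using hy
  have hintegrand : ∀ s ∈ Set.Ioi (0 : ℝ),
      (if ENNReal.ofReal s < y then ENNReal.ofReal (s ^ c) else 0) / ENNReal.ofReal s =
        (Set.Ioo 0 (y : ℝ)).indicator (fun s => ENNReal.ofReal (s ^ (c - 1))) s := by
    intro s (hs : 0 < s)
    simp only [ENNReal.ofReal_lt_coe_iff hs.le, Set.indicator_apply, Set.mem_Ioo, hs, true_and]
    split_ifs
    · rw [← ENNReal.ofReal_div_of_pos hs, Real.rpow_sub_one hs.ne']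
    · exact ENNReal.zero_div
  rw [lintegral_logMeasure, setLIntegral_congr_fun measurableSet_Ioi hintegrand,
    setLIntegral_indicator measurableSet_Ioo, Set.inter_eq_left.2 Set.Ioo_subset_Ioi_self,
    lintegral_Ioo_rpow y.coe_nonneg hc, div_eq_mul_one_div, mul_comm,
    ENNReal.ofReal_mul (by positivity),
    ← ENNReal.ofReal_rpow_of_nonneg y.coe_nonneg hc.le]
  simp

lemma lintegral_rpow_logMeasure (y : ℝ≥0∞) {c : ℝ} (hc : 0 < c) :
    ∫⁻ s, (if ENNReal.ofReal s < y then ENNReal.ofReal (s ^ c) else 0) ∂logMeasure =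
      ENNReal.ofReal (1 / c) * y ^ c := by
  rcases eq_or_ne y ⊤ with rfl | hy
  · have htop : ENNReal.ofReal (1 / c) * ⊤ ^ c = ⊤ := by
      rw [ENNReal.top_rpow_of_pos hc, ENNReal.mul_top (ENNReal.ofReal_pos.2 (by positivity)).ne']
    have hlim : Tendsto (fun n : ℕ => ENNReal.ofReal (1 / c) * (n : ℝ≥0∞) ^ c) atTop (𝓝 ⊤) :=
      htop ▸ ENNReal.Tendsto.const_mul
        (((ENNReal.continuous_rpow_const (y := c)).tendsto ⊤).comp ENNReal.tendsto_nat_nhds_top)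
        (Or.inr ENNReal.ofReal_ne_top)
    rw [htop]
    refine top_unique (le_of_tendsto' hlim fun n => ?_)
    rw [← lintegral_rpow_logMeasure_of_ne_top (ENNReal.natCast_ne_top n) hc]
    refine lintegral_mono fun s => ?_
    simp only [ENNReal.ofReal_lt_top, if_true]
    split_ifs <;> simp
  · exact lintegral_rpow_logMeasure_of_ne_top hy hc

lemma lintegral_const_mul_rpow_logMeasure (y : ℝ≥0∞) {C : ℝ≥0∞} (hC : C ≠ ⊤) {c : ℝ} (hc : 0 < c) :
    ∫⁻ s, (if ENNReal.ofReal s < y then C * ENNReal.ofReal (s ^ c) else 0) ∂logMeasure =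
      C * (ENNReal.ofReal (1 / c) * y ^ c) := by
  rw [← lintegral_rpow_logMeasure y hc, ← lintegral_const_mul' _ _ hC]
  simp only [mul_ite, mul_zero]

lemma le_logMeasure_Ico {x y : ℝ} (hx : 0 < x) (hxy : x ≤ y) :
    ENNReal.ofReal ((y - x) / y) ≤ logMeasure (Set.Ico x y) := by
  have hpos : Set.Ico x y ⊆ Set.Ioi 0 := fun s hs => hx.trans_le hs.1
  calc ENNReal.ofReal ((y - x) / y)
      = ∫⁻ _ in Set.Ico x y, (ENNReal.ofReal y)⁻¹ := by
        rw [setLIntegral_const, Real.volume_Ico, ENNReal.ofReal_div_of_pos (hx.trans_le hxy),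
          div_eq_mul_inv, mul_comm]
    _ ≤ ∫⁻ s in Set.Ico x y, (ENNReal.ofReal s)⁻¹ :=
        setLIntegral_mono' measurableSet_Ico fun s hs =>
          ENNReal.inv_le_inv.2 (ENNReal.ofReal_le_ofReal hs.2.le)
    _ = logMeasure (Set.Ico x y) := by
        rw [logMeasure_apply measurableSet_Ico, Set.inter_eq_left.2 hpos]

lemma logMeasure_Ioi (x : ℝ) : logMeasure (Set.Ioi x) = ⊤ := by
  by_contra hfin
  rw [logMeasure_apply measurableSet_Ioi, Set.Ioi_inter_Ioi] at hfin
  refine not_integrableOn_Ioi_inv (a := x ⊔ 0) ⟨by fun_prop, ?_⟩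
  refine lt_of_eq_of_lt (setLIntegral_congr_fun measurableSet_Ioi fun s hs => ?_)
    (lt_top_iff_ne_top.2 hfin)
  have hs : 0 < s := le_sup_right.trans_lt hs
  rw [Real.enorm_of_nonneg (by positivity), ENNReal.ofReal_inv_of_pos hs]

section Distribution

variable {α E : Type*} [MeasurableSpace α] [ENorm E] {ν : Measure α} {f g : α → E}

/-- The distribution function `l ↦ ν {l < ‖f‖}` of `f`, the generalized inverse of the decreasing
rearrangement. -/
def distribution (ν : Measure α) (f : α → E) (l : ℝ≥0∞) : ℝ≥0∞ := ν {x | l < ‖f x‖ₑ}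

lemma distribution_antitone : Antitone (distribution ν f) :=
  fun _ _ hl => measure_mono fun _ hx => lt_of_le_of_lt hl hx

lemma distribution_congr (hfg : f =ᵐ[ν] g) : distribution ν f = distribution ν g := by
  funext l
  refine measure_congr ?_
  filter_upwards [hfg] with x hx
  exact congrArg (fun y : E => l < ‖y‖ₑ) hx

lemma distribution_le_of_forall_gt {l c : ℝ≥0∞} (h : ∀ l' > l, distribution ν f l' ≤ c) :
    distribution ν f l ≤ c := by
  rcases eq_or_ne l ⊤ with rfl | hl
  · simp [distribution]
  obtain ⟨u, hu_anti, hu_mem, hu_lim⟩ := exists_seq_strictAnti_tendsto' (lt_top_iff_ne_top.2 hl)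
  have hUnion : {x | l < ‖f x‖ₑ} = ⋃ n, {x | u n < ‖f x‖ₑ} := by
    ext x
    simp only [Set.mem_ofPred_eq, Set.mem_iUnion]
    exact ⟨fun hx => (hu_lim.eventually_lt_const hx).exists,
      fun ⟨n, hn⟩ => (hu_mem n).1.trans hn⟩
  have hmono : Monotone fun n => {x | u n < ‖f x‖ₑ} :=
    fun _ _ hij _ hx => lt_of_le_of_lt (hu_anti.antitone hij) hx
  rw [distribution, hUnion, hmono.measure_iUnion]
  exact iSup_le fun n => h _ (hu_mem n).1

end Distribution

section DistributionIndicator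

variable {α : Type*} [MeasurableSpace α] {ν : Measure α}

lemma distribution_indicator_one (A : Set α) (l : ℝ≥0∞) :
    distribution ν (A.indicator (1 : α → ℂ)) l = if l < 1 then ν A else 0 := by
  have hset : {x | l < ‖A.indicator (1 : α → ℂ) x‖ₑ} = if l < 1 then A else ∅ := by
    ext x
    by_cases hx : x ∈ A <;> split_ifs <;> simp_all
  rw [distribution, hset]
  split_ifs
  exacts [rfl, measure_empty]

end DistributionIndicator

instance : IsProbabilityMeasure μ :=
  inferInstanceAs (IsProbabilityMeasure (AddCircle.haarAddCircle (T := 2 * Real.pi)))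

lemma lt_decRearr_iff {f : 𝕋 → ℂ} {l : ℝ≥0∞} {s : ℝ} :
    l < decRearr f s ↔ ENNReal.ofReal s < distribution μ f l := by
  constructor <;> contrapose!
  · exact fun h => sInf_le h
  · refine fun h => distribution_le_of_forall_gt fun l' hl' => ?_
    obtain ⟨k, hk, hkl'⟩ := sInf_lt_iff.1 (h.trans_lt hl')
    exact (distribution_antitone hkl'.le).trans hk

lemma decRearr_le_iff {f : 𝕋 → ℂ} {l : ℝ≥0∞} {s : ℝ} :
    decRearr f s ≤ l ↔ distribution μ f l ≤ ENNReal.ofReal s := by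
  rw [← not_lt, lt_decRearr_iff, not_lt]

lemma distribution_decRearr_le (f : 𝕋 → ℂ) (s : ℝ) :
    distribution μ f (decRearr f s) ≤ ENNReal.ofReal s :=
  decRearr_le_iff.1 le_rfl

lemma decRearr_antitone (f : 𝕋 → ℂ) : Antitone (decRearr f) := fun s _ hs =>
  decRearr_le_iff.2 ((distribution_decRearr_le f s).trans (ENNReal.ofReal_le_ofReal hs))

lemma measurable_decRearr (f : 𝕋 → ℂ) : Measurable (decRearr f) :=
  (decRearr_antitone f).measurable

lemma decRearr_eq_zero {s : ℝ} (hs : 1 ≤ s) (f : 𝕋 → ℂ) : decRearr f s = 0 :=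
  nonpos_iff_eq_zero.1 <| decRearr_le_iff.2 <| prob_le_one.trans <| ENNReal.one_le_ofReal.2 hs

lemma decRearr_const_mul_le (c : ℂ) (f : 𝕋 → ℂ) (s : ℝ) :
    decRearr (fun t => c * f t) s ≤ ‖c‖ₑ * decRearr f s := by
  refine decRearr_le_iff.2 ((measure_mono fun t ht => ?_).trans (distribution_decRearr_le f s))
  simp only [Set.mem_ofPred_eq, enorm_mul] at ht
  exact lt_of_mul_lt_mul_left' ht

lemma decRearr_mul_le (g k : 𝕋 → ℂ) {s : ℝ} (hs : 0 ≤ s) :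
    decRearr (fun t => g t * k t) (2 * s) ≤ decRearr g s * decRearr k s := by
  have hsub : {t | decRearr g s * decRearr k s < ‖g t * k t‖ₑ} ⊆
      {t | decRearr g s < ‖g t‖ₑ} ∪ {t | decRearr k s < ‖k t‖ₑ} := by
    intro t ht
    contrapose! ht
    simp only [Set.mem_union, Set.mem_ofPred_eq, not_or, not_lt, enorm_mul] at ht ⊢
    exact mul_le_mul' ht.1 ht.2
  refine decRearr_le_iff.2 ?_
  calc distribution μ (fun t => g t * k t) (decRearr g s * decRearr k s)
      ≤ distribution μ g (decRearr g s) + distribution μ k (decRearr k s) :=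
        (measure_mono hsub).trans (measure_union_le _ _)
    _ ≤ ENNReal.ofReal s + ENNReal.ofReal s :=
        add_le_add (distribution_decRearr_le _ _) (distribution_decRearr_le _ _)
    _ = ENNReal.ofReal (2 * s) := by rw [← ENNReal.ofReal_add hs hs, two_mul]

lemma decRearr_congr {f g : 𝕋 → ℂ} (hfg : f =ᵐ[μ] g) : decRearr f = decRearr g := by
  funext s
  exact eq_of_forall_lt_iff fun l => by
    rw [lt_decRearr_iff, lt_decRearr_iff, distribution_congr hfg]

section Lorentz

variable {p q : ℝ≥0∞} {f g : 𝕋 → ℂ}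

lemma one_div_toReal_pos (hp0 : p ≠ 0) (hpt : p ≠ ⊤) : 0 < (1 / p).toReal := by
  rw [one_div]
  exact ENNReal.toReal_pos (ENNReal.inv_ne_zero.2 hpt) (ENNReal.inv_ne_top.2 hp0)

lemma lorentzN_congr (p q : ℝ≥0∞) (hfg : f =ᵐ[μ] g) : lorentzN p q f = lorentzN p q g := by
  simp only [lorentzN, decRearr_congr hfg]

lemma lorentzN_top (p : ℝ≥0∞) (f : 𝕋 → ℂ) :
    lorentzN p ⊤ f =
      ⨆ s : Set.Ioo (0 : ℝ) 1, decRearr f s * ENNReal.ofReal (s.1 ^ (1 / p).toReal) :=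
  if_pos rfl

lemma decRearr_mul_rpow_le_lorentzN_top (p : ℝ≥0∞) (f : 𝕋 → ℂ) {s : ℝ} (hs : 0 < s) :
    decRearr f s * ENNReal.ofReal (s ^ (1 / p).toReal) ≤ lorentzN p ⊤ f := by
  rcases lt_or_ge s 1 with hs1 | hs1
  · rw [lorentzN_top]
    exact le_iSup (fun s : Set.Ioo (0 : ℝ) 1 =>
      decRearr f s * ENNReal.ofReal (s.1 ^ (1 / p).toReal)) ⟨s, hs, hs1⟩
  · rw [decRearr_eq_zero hs1, zero_mul]
    exact zero_le

lemma lorentzN_eq_lintegral_decRearr (hq0 : q ≠ 0) (hqt : q ≠ ⊤) (p : ℝ≥0∞) (f : 𝕋 → ℂ) :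
    lorentzN p q f =
      (∫⁻ s, (decRearr f s * ENNReal.ofReal (s ^ (1 / p).toReal)) ^ q.toReal ∂logMeasure) ^
        (1 / q).toReal := by
  have hIoo : Set.Ioo (0 : ℝ) 1 = Set.Iio 1 ∩ Set.Ioi 0 := Set.inter_comm _ _
  rw [lorentzN, if_neg hqt, lintegral_logMeasure, hIoo, ← setLIntegral_indicator measurableSet_Iio]
  congr 2 with s
  rw [Set.indicator_apply]
  split_ifs with hs
  · rfl
  · rw [decRearr_eq_zero (not_lt.1 hs), zero_mul,
      ENNReal.zero_rpow_of_pos (ENNReal.toReal_pos hq0 hqt), ENNReal.zero_div]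

lemma lintegral_decRearr_rpow (f : 𝕋 → ℂ) {a r : ℝ} (ha : 0 < a) (hr : 0 < r) :
    ∫⁻ s, (decRearr f s * ENNReal.ofReal (s ^ a)) ^ r ∂logMeasure =
      ENNReal.ofReal (1 / a) *
        ∫⁻ t, (ENNReal.ofReal t * distribution μ f (ENNReal.ofReal t) ^ a) ^ r ∂logMeasure := by
  let F : ℝ → ℝ → ℝ≥0∞ := fun s t => if ENNReal.ofReal t < decRearr f s
    then ENNReal.ofReal r * ENNReal.ofReal (s ^ (a * r)) * ENNReal.ofReal (t ^ r) else 0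
  have hF_meas : Measurable (Function.uncurry F) :=
    Measurable.ite (measurableSet_lt (by fun_prop) ((measurable_decRearr f).comp measurable_fst))
      (by fun_prop) measurable_const
  have hF_left : ∀ s > 0, (decRearr f s * ENNReal.ofReal (s ^ a)) ^ r =
      ∫⁻ t, F s t ∂logMeasure := by
    intro s hs
    rw [lintegral_const_mul_rpow_logMeasure _ (by finiteness) hr, mul_mul_mul_comm,
      ← ENNReal.ofReal_mul hr.le, mul_one_div_cancel hr.ne', ENNReal.ofReal_one, one_mul,
      ENNReal.mul_rpow_of_nonneg _ _ hr.le, ENNReal.ofReal_rpow_of_nonneg (by positivity) hr.le,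
      ← Real.rpow_mul hs.le, mul_comm]
  have hF_right : ∀ t > 0, ∫⁻ s, F s t ∂logMeasure = ENNReal.ofReal (1 / a) *
      (ENNReal.ofReal t * distribution μ f (ENNReal.ofReal t) ^ a) ^ r := by
    intro t ht
    simp only [F, lt_decRearr_iff, mul_right_comm (ENNReal.ofReal r)]
    rw [lintegral_const_mul_rpow_logMeasure _ (by finiteness) (by positivity), mul_mul_mul_comm,
      ← ENNReal.ofReal_mul hr.le, ENNReal.mul_rpow_of_nonneg _ _ hr.le,
      ENNReal.ofReal_rpow_of_nonneg ht.le hr.le, ← ENNReal.rpow_mul]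
    congr 2
    field_simp
  calc ∫⁻ s, (decRearr f s * ENNReal.ofReal (s ^ a)) ^ r ∂logMeasure
      = ∫⁻ s, ∫⁻ t, F s t ∂logMeasure ∂logMeasure :=
        lintegral_congr_ae (ae_logMeasure_pos.mono hF_left)
    _ = ∫⁻ t, ∫⁻ s, F s t ∂logMeasure ∂logMeasure := lintegral_lintegral_swap hF_meas.aemeasurable
    _ = ENNReal.ofReal (1 / a) * ∫⁻ t,
          (ENNReal.ofReal t * distribution μ f (ENNReal.ofReal t) ^ a) ^ r ∂logMeasure := by
        rw [lintegral_congr_ae (ae_logMeasure_pos.mono hF_right),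
          lintegral_const_mul' _ _ ENNReal.ofReal_ne_top]

lemma lorentzN_eq_lintegral_distribution (hp0 : p ≠ 0) (hpt : p ≠ ⊤) (hq0 : q ≠ 0) (hqt : q ≠ ⊤)
    (f : 𝕋 → ℂ) :
    lorentzN p q f = (ENNReal.ofReal (1 / (1 / p).toReal) *
      ∫⁻ t, (ENNReal.ofReal t * distribution μ f (ENNReal.ofReal t) ^ (1 / p).toReal) ^ q.toReal
        ∂logMeasure) ^ (1 / q).toReal := by
  rw [lorentzN_eq_lintegral_decRearr hq0 hqt,
    lintegral_decRearr_rpow f (one_div_toReal_pos hp0 hpt) (ENNReal.toReal_pos hq0 hqt)]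

lemma lorentzN_top_eq_iSup_distribution (hp0 : p ≠ 0) (hpt : p ≠ ⊤) (f : 𝕋 → ℂ) :
    lorentzN p ⊤ f = ⨆ l, l * distribution μ f l ^ (1 / p).toReal := by
  have ha := one_div_toReal_pos hp0 hpt
  refine le_antisymm ?_ (iSup_le fun l => ?_)
  · rw [lorentzN_top]
    refine iSup_le fun s => ENNReal.mul_le_of_forall_lt fun l hl x hx => le_iSup_of_le l ?_
    refine mul_le_mul_right (hx.le.trans ?_) l
    rw [← ENNReal.ofReal_rpow_of_pos s.2.1]
    exact ENNReal.rpow_le_rpow (lt_decRearr_iff.1 hl).le ha.le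
  · refine ENNReal.mul_le_of_forall_lt fun l' hl' x hx => ?_
    have hxd : x ^ (1 / p).toReal⁻¹ < distribution μ f l := (ENNReal.rpow_inv_lt_iff ha).2 hx
    obtain ⟨s, hs0, hs⟩ : ∃ s, 0 ≤ s ∧ ENNReal.ofReal s = x ^ (1 / p).toReal⁻¹ :=
      ⟨_, ENNReal.toReal_nonneg, ENNReal.ofReal_toReal (hxd.trans_le le_top).ne⟩
    have hxs : x = ENNReal.ofReal (s ^ (1 / p).toReal) := by
      rw [← ENNReal.ofReal_rpow_of_nonneg hs0 ha.le, hs, ENNReal.rpow_inv_rpow ha.ne']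
    rcases hs0.eq_or_lt with rfl | hs_pos
    · rw [hxs, Real.zero_rpow ha.ne', ENNReal.ofReal_zero, mul_zero]
      exact zero_le
    · refine le_trans ?_ (decRearr_mul_rpow_le_lorentzN_top p f hs_pos)
      rw [hxs]
      exact mul_le_mul_left (hl'.trans (lt_decRearr_iff.2 (hs ▸ hxd))).le _

lemma lorentzN_le_of_decRearr_le (hq0 : q ≠ 0) {C : ℝ≥0∞} {r : ℝ} (hr : 0 < r)
    (h : ∀ s > 0, decRearr g s ≤ C * decRearr f (r * s)) :
    lorentzN p q g ≤ C * ENNReal.ofReal (r ^ (-(1 / p).toReal)) * lorentzN p q f := by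
  have hrs : ∀ s > 0, decRearr g s * ENNReal.ofReal (s ^ (1 / p).toReal) ≤
      C * ENNReal.ofReal (r ^ (-(1 / p).toReal)) *
        (decRearr f (r * s) * ENNReal.ofReal ((r * s) ^ (1 / p).toReal)) := by
    intro s hs
    refine (mul_le_mul_left (h s hs) _).trans_eq ?_
    rw [mul_mul_mul_comm, ← ENNReal.ofReal_mul (by positivity), Real.mul_rpow hr.le hs.le,
      ← mul_assoc, ← Real.rpow_add hr, neg_add_cancel, Real.rpow_zero, one_mul]
  rcases eq_or_ne q ⊤ with rfl | hqt
  · rw [lorentzN_top p g]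
    exact iSup_le fun s => (hrs s s.2.1).trans
      (mul_le_mul_right (decRearr_mul_rpow_le_lorentzN_top p f (mul_pos hr s.2.1)) _)
  · have hq := ENNReal.toReal_pos hq0 hqt
    let F : ℝ → ℝ≥0∞ := fun s =>
      (decRearr f s * ENNReal.ofReal (s ^ (1 / p).toReal)) ^ q.toReal
    have hF_meas : Measurable fun s => F (r * s) := by
      have := measurable_decRearr f
      fun_prop
    rw [lorentzN_eq_lintegral_decRearr hq0 hqt, lorentzN_eq_lintegral_decRearr hq0 hqt, one_div q,
      ENNReal.toReal_inv, ENNReal.rpow_inv_le_iff hq, ENNReal.mul_rpow_of_nonneg _ _ hq.le,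
      ENNReal.rpow_inv_rpow hq.ne', ← lintegral_comp_mul_left_logMeasure hr F,
      ← lintegral_const_mul _ hF_meas]
    refine lintegral_mono_ae (ae_logMeasure_pos.mono fun s hs => ?_)
    rw [← ENNReal.mul_rpow_of_nonneg _ _ hq.le]
    exact ENNReal.rpow_le_rpow (hrs s hs) hq.le

lemma lorentzN_const_mul_le (hq0 : q ≠ 0) (p : ℝ≥0∞) (c : ℂ) (f : 𝕋 → ℂ) :
    lorentzN p q (fun t => c * f t) ≤ ‖c‖ₑ * lorentzN p q f := by
  have hdecRearr : ∀ s > 0, decRearr (fun t => c * f t) s ≤ ‖c‖ₑ * decRearr f (1 * s) :=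
    fun s _ => by simpa only [one_mul] using decRearr_const_mul_le c f s
  simpa using lorentzN_le_of_decRearr_le (p := p) hq0 one_pos hdecRearr

lemma lorentzN_indicator_one (hp0 : p ≠ 0) (hpt : p ≠ ⊤) (hq0 : q ≠ 0) (hqt : q ≠ ⊤) (A : Set 𝕋) :
    lorentzN p q (A.indicator 1) =
      ENNReal.ofReal (1 / ((1 / p).toReal * q.toReal)) ^ (1 / q).toReal * μ A ^ (1 / p).toReal := by
  have ha := one_div_toReal_pos hp0 hpt
  have hq := ENNReal.toReal_pos hq0 hqt
  have hintegrand : ∀ t > 0, (ENNReal.ofReal t *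
      distribution μ (A.indicator (1 : 𝕋 → ℂ)) (ENNReal.ofReal t) ^ (1 / p).toReal) ^ q.toReal =
      if ENNReal.ofReal t < 1
        then (μ A ^ (1 / p).toReal) ^ q.toReal * ENNReal.ofReal (t ^ q.toReal) else 0 := by
    intro t ht
    rw [distribution_indicator_one]
    split_ifs
    · rw [ENNReal.mul_rpow_of_nonneg _ _ hq.le, ENNReal.ofReal_rpow_of_nonneg ht.le hq.le, mul_comm]
    · rw [ENNReal.zero_rpow_of_pos ha, mul_zero, ENNReal.zero_rpow_of_pos hq]
  rw [lorentzN_eq_lintegral_distribution hp0 hpt hq0 hqt,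
    lintegral_congr_ae (ae_logMeasure_pos.mono hintegrand),
    lintegral_const_mul_rpow_logMeasure _ (by finiteness) hq, ENNReal.one_rpow, mul_one,
    mul_left_comm, ← ENNReal.ofReal_mul (by positivity), one_div_mul_one_div, mul_comm,
    ENNReal.mul_rpow_of_nonneg _ _ ENNReal.toReal_nonneg, one_div q, ENNReal.toReal_inv,
    ENNReal.rpow_rpow_inv hq.ne']

lemma lorentzN_top_indicator_one (hp0 : p ≠ 0) (hpt : p ≠ ⊤) (A : Set 𝕋) :
    lorentzN p ⊤ (A.indicator 1) = μ A ^ (1 / p).toReal := by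
  have ha := one_div_toReal_pos hp0 hpt
  rw [lorentzN_top_eq_iSup_distribution hp0 hpt]
  simp only [distribution_indicator_one]
  refine le_antisymm (iSup_le fun l => ?_) ?_
  · split_ifs with hl
    · exact mul_le_of_le_one_left' hl.le
    · rw [ENNReal.zero_rpow_of_pos ha, mul_zero]
      exact zero_le
  · rw [← one_mul (μ A ^ _)]
    refine ENNReal.mul_le_of_forall_lt fun l hl x hx => le_iSup_of_le l ?_
    rw [if_pos hl]
    exact mul_le_mul_right hx.le l

end Lorentz

section Holder

variable {p p₁ p₂ q q₁ q₂ : ℝ≥0∞}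

lemma one_div_toReal_add (hp₁ : p₁ ≠ 0) (hp₂ : p₂ ≠ 0) [ENNReal.HolderTriple p₁ p₂ p] :
    (1 / p).toReal = (1 / p₁).toReal + (1 / p₂).toReal := by
  rw [one_div, one_div, one_div, ← ENNReal.HolderTriple.inv_add_inv_eq_inv p₁ p₂ p,
    ENNReal.toReal_add (ENNReal.inv_ne_top.2 hp₁) (ENNReal.inv_ne_top.2 hp₂)]

lemma lorentzN_mul_le_lintegral (hp₁ : p₁ ≠ 0) (hp₂ : p₂ ≠ 0) [ENNReal.HolderTriple p₁ p₂ p]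
    (hq0 : q ≠ 0) (hqt : q ≠ ⊤) (g k : 𝕋 → ℂ) :
    lorentzN p q (fun t => g t * k t) ≤ ENNReal.ofReal (2 ^ (1 / p).toReal) *
      (∫⁻ s, (decRearr g s * ENNReal.ofReal (s ^ (1 / p₁).toReal) *
        (decRearr k s * ENNReal.ofReal (s ^ (1 / p₂).toReal))) ^ q.toReal ∂logMeasure) ^
          (1 / q).toReal := by
  have hq := ENNReal.toReal_pos hq0 hqt
  rw [lorentzN_eq_lintegral_decRearr hq0 hqt, ← lintegral_comp_mul_left_logMeasure two_pos,
    one_div q, ENNReal.toReal_inv, ENNReal.rpow_inv_le_iff hq,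
    ENNReal.mul_rpow_of_nonneg _ _ hq.le, ENNReal.rpow_inv_rpow hq.ne',
    ← lintegral_const_mul' _ _ (by finiteness)]
  refine lintegral_mono_ae (ae_logMeasure_pos.mono fun s hs => ?_)
  rw [← ENNReal.mul_rpow_of_nonneg _ _ hq.le]
  refine ENNReal.rpow_le_rpow ((mul_le_mul_left (decRearr_mul_le g k hs.le) _).trans_eq ?_) hq.le
  rw [mul_mul_mul_comm, ← ENNReal.ofReal_mul (by positivity), ← Real.rpow_add hs,
    ← one_div_toReal_add (p := p) hp₁ hp₂, Real.mul_rpow two_pos.le hs.le,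
    ENNReal.ofReal_mul (by positivity), mul_left_comm]

lemma lorentzN_mul_le (hp₁ : p₁ ≠ 0) (hp₂ : p₂ ≠ 0) [ENNReal.HolderTriple p₁ p₂ p]
    (hq₁0 : q₁ ≠ 0) (hq₁t : q₁ ≠ ⊤) (hq₂0 : q₂ ≠ 0) (hq₂t : q₂ ≠ ⊤)
    [ENNReal.HolderTriple q₁ q₂ q] (g k : 𝕋 → ℂ) :
    lorentzN p q (fun t => g t * k t) ≤
      ENNReal.ofReal (2 ^ (1 / p).toReal) * (lorentzN p₁ q₁ g * lorentzN p₂ q₂ k) := by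
  have hq_real : q₁.toReal.HolderTriple q₂.toReal q.toReal :=
    ENNReal.HolderTriple.toReal q (ENNReal.toReal_pos hq₁0 hq₁t)
      (ENNReal.toReal_pos hq₂0 hq₂t)
  obtain ⟨hq0, hqt⟩ : q ≠ 0 ∧ q ≠ ⊤ := by
    simpa only [pos_iff_ne_zero, lt_top_iff_ne_top] using ENNReal.toReal_pos_iff.1 hq_real.pos'
  have hmeas : ∀ (f : 𝕋 → ℂ) (a : ℝ),
      AEMeasurable (fun s => decRearr f s * ENNReal.ofReal (s ^ a)) logMeasure := fun f a => by
    have := measurable_decRearr f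
    fun_prop
  refine (lorentzN_mul_le_lintegral hp₁ hp₂ hq0 hqt g k).trans (mul_le_mul_right ?_ _)
  rw [lorentzN_eq_lintegral_decRearr hq₁0 hq₁t, lorentzN_eq_lintegral_decRearr hq₂0 hq₂t]
  simpa only [ENNReal.toReal_div, ENNReal.toReal_one] using!
    ENNReal.lintegral_Lp_mul_le_Lq_mul_Lr hq_real.pos' hq_real.lt hq_real.one_div_eq _
      (hmeas g (1 / p₁).toReal) (hmeas k (1 / p₂).toReal)

lemma lorentzN_mul_le_mul_lorentzN_top (hp₁ : p₁ ≠ 0) (hp₂ : p₂ ≠ 0)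
    [ENNReal.HolderTriple p₁ p₂ p] (hq0 : q ≠ 0) (hqt : q ≠ ⊤) (g k : 𝕋 → ℂ) :
    lorentzN p q (fun t => g t * k t) ≤
      ENNReal.ofReal (2 ^ (1 / p).toReal) * (lorentzN p₁ q g * lorentzN p₂ ⊤ k) := by
  have hq := ENNReal.toReal_pos hq0 hqt
  refine (lorentzN_mul_le_lintegral hp₁ hp₂ hq0 hqt g k).trans (mul_le_mul_right ?_ _)
  rw [lorentzN_eq_lintegral_decRearr hq0 hqt, one_div q, ENNReal.toReal_inv,
    ENNReal.rpow_inv_le_iff hq, ENNReal.mul_rpow_of_nonneg _ _ hq.le, ENNReal.rpow_inv_rpow hq.ne',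
    ← lintegral_mul_const]
  · refine lintegral_mono_ae (ae_logMeasure_pos.mono fun s hs => ?_)
    rw [← ENNReal.mul_rpow_of_nonneg _ _ hq.le]
    exact ENNReal.rpow_le_rpow
      (mul_le_mul_right (decRearr_mul_rpow_le_lorentzN_top p₂ k hs) _) hq.le
  · have := measurable_decRearr g
    fun_prop

end Holder

section Factorization

lemma rpow_tsum_le_tsum_rpow {ι : Type*} (x : ι → ℝ≥0∞) {a : ℝ} (ha : 0 < a) (ha1 : a ≤ 1) :
    (∑' i, x i) ^ a ≤ ∑' i, x i ^ a := by
  classical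
  rw [← ENNReal.le_rpow_inv_iff ha, ENNReal.tsum_eq_iSup_sum]
  refine iSup_le fun s => ?_
  rw [ENNReal.le_rpow_inv_iff ha]
  refine le_trans ?_ (ENNReal.sum_le_tsum s)
  induction s using Finset.induction_on with
  | empty => simp [ha]
  | insert i s hi ih =>
    rw [Finset.sum_insert hi, Finset.sum_insert hi]
    exact (ENNReal.rpow_add_le_add_rpow _ _ ha.le ha1).trans (add_le_add le_rfl ih)

variable {α : Type*} [MeasurableSpace α] {ν : Measure α}

lemma distribution_le_tsum {ι : Type*} [Countable ι] {f : α → ℂ} {A : ι → Set α} {β : ι → ℝ≥0∞}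
    (hcover : ∀ x, f x ≠ 0 → ∃ i, x ∈ A i ∧ ‖f x‖ₑ ≤ β i) (l : ℝ≥0∞) :
    distribution ν f l ≤ ∑' i, if l < β i then ν (A i) else 0 := by
  have hsub : {x | l < ‖f x‖ₑ} ⊆ ⋃ i, {x | l < β i ∧ x ∈ A i} := by
    intro x (hx : l < ‖f x‖ₑ)
    obtain ⟨i, hi, hβ⟩ := hcover x (enorm_ne_zero.1 (pos_of_gt hx).ne')
    exact Set.mem_iUnion.2 ⟨i, hx.trans_le hβ, hi⟩
  refine (measure_mono hsub).trans ((measure_iUnion_le _).trans (ENNReal.tsum_le_tsum fun i => ?_))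
  split_ifs with hl <;> simp [hl]

lemma lintegral_mul_distribution_rpow_le_tsum [IsFiniteMeasure ν] {ι : Type*} [Countable ι]
    {f : α → ℂ} {A : ι → Set α} {β : ι → ℝ≥0∞}
    (hcover : ∀ x, f x ≠ 0 → ∃ i, x ∈ A i ∧ ‖f x‖ₑ ≤ β i) {a : ℝ} (ha : 0 < a) (ha1 : a ≤ 1) :
    ∫⁻ t, ENNReal.ofReal t * distribution ν f (ENNReal.ofReal t) ^ a ∂logMeasure ≤
      ∑' i, β i * ν (A i) ^ a := by
  have hmeas : ∀ i, Measurable fun t => if ENNReal.ofReal t < β i then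
      ν (A i) ^ a * ENNReal.ofReal (t ^ (1 : ℝ)) else 0 := fun i =>
    Measurable.ite (measurableSet_lt ENNReal.measurable_ofReal measurable_const) (by fun_prop)
      measurable_const
  calc ∫⁻ t, ENNReal.ofReal t * distribution ν f (ENNReal.ofReal t) ^ a ∂logMeasure
      ≤ ∫⁻ t, ∑' i, (if ENNReal.ofReal t < β i then
          ν (A i) ^ a * ENNReal.ofReal (t ^ (1 : ℝ)) else 0) ∂logMeasure := by
        refine lintegral_mono fun t => ?_
        have hle := (ENNReal.rpow_le_rpow (distribution_le_tsum (ν := ν) hcover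
          (ENNReal.ofReal t)) ha.le).trans (rpow_tsum_le_tsum_rpow _ ha ha1)
        refine (mul_le_mul_right hle _).trans ?_
        rw [← ENNReal.tsum_mul_left]
        refine ENNReal.tsum_le_tsum fun i => ?_
        split_ifs <;> simp [ha, mul_comm]
    _ = ∑' i, β i * ν (A i) ^ a := by
        rw [lintegral_tsum fun i => (hmeas i).aemeasurable]
        refine tsum_congr fun i => ?_
        rw [lintegral_const_mul_rpow_logMeasure _
          (ENNReal.rpow_ne_top_of_nonneg ha.le (measure_ne_top _ _)) one_pos]
        simp [mul_comm]

lemma rpow_mul_measure_le_setLIntegral_Ico (f : α → ℂ) {x y r c : ℝ} (hx : 0 < x) (hxy : x ≤ y)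
    (hr : 0 ≤ r) (hc : 0 ≤ c) :
    ENNReal.ofReal x ^ r * ν {z | ENNReal.ofReal y ≤ ‖f z‖ₑ} ^ c * ENNReal.ofReal ((y - x) / y) ≤
      ∫⁻ t in Set.Ico x y, ENNReal.ofReal t ^ r * distribution ν f (ENNReal.ofReal t) ^ c
        ∂logMeasure := by
  set E := {z | ENNReal.ofReal y ≤ ‖f z‖ₑ}
  calc ENNReal.ofReal x ^ r * ν E ^ c * ENNReal.ofReal ((y - x) / y)
      ≤ ∫⁻ _ in Set.Ico x y, ENNReal.ofReal x ^ r * ν E ^ c ∂logMeasure := by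
        rw [setLIntegral_const]
        exact mul_le_mul_right (le_logMeasure_Ico hx hxy) _
    _ ≤ _ := by
        refine setLIntegral_mono' measurableSet_Ico fun t ht => ?_
        have hE : ν E ≤ distribution ν f (ENNReal.ofReal t) := measure_mono fun z hz =>
          ((ENNReal.ofReal_lt_ofReal_iff (hx.trans_le hxy)).2 ht.2).trans_le hz
        have hxt := ENNReal.ofReal_le_ofReal ht.1
        gcongr

lemma tsum_zpow_mul_measure_le (f : α → ℂ) {b r c : ℝ} (hb : 1 < b) (hr : 0 ≤ r) (hc : 0 ≤ c) :
    ∑' n : ℤ, ENNReal.ofReal (b ^ n) ^ r * ν {x | ENNReal.ofReal (b ^ n) ≤ ‖f x‖ₑ} ^ c ≤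
      ENNReal.ofReal (b ^ r * (b / (b - 1))) *
        ∫⁻ t, ENNReal.ofReal t ^ r * distribution ν f (ENNReal.ofReal t) ^ c ∂logMeasure := by
  have hb0 : 0 < b := one_pos.trans hb
  have hb1 : 0 < b - 1 := sub_pos.2 hb
  have hdisj : Pairwise (Function.onFun Disjoint fun n : ℤ => Set.Ico (b ^ (n - 1)) (b ^ n)) := by
    simpa only [Order.pred_eq_sub_one] using
      (zpow_right_mono₀ hb.le).pairwise_disjoint_on_Ico_pred
  have hscale (n : ℤ) : ENNReal.ofReal (b ^ n) ^ r = ENNReal.ofReal (b ^ r * (b / (b - 1))) *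
      (ENNReal.ofReal (b ^ (n - 1)) ^ r * ENNReal.ofReal ((b ^ n - b ^ (n - 1)) / b ^ n)) := by
    have hn : 0 < b ^ n := zpow_pos hb0 n
    rw [ENNReal.ofReal_rpow_of_nonneg hn.le hr,
      ENNReal.ofReal_rpow_of_nonneg (zpow_pos hb0 _).le hr, ← ENNReal.ofReal_mul (by positivity),
      ← ENNReal.ofReal_mul (by positivity), zpow_sub_one₀ hb0.ne', Real.mul_rpow hn.le
      (inv_nonneg.2 hb0.le), Real.inv_rpow hb0.le]
    congr 1
    field_simp
  calc _ ≤ ∑' n : ℤ, ENNReal.ofReal (b ^ r * (b / (b - 1))) *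
        ∫⁻ t in Set.Ico (b ^ (n - 1)) (b ^ n),
          ENNReal.ofReal t ^ r * distribution ν f (ENNReal.ofReal t) ^ c ∂logMeasure := by
        refine ENNReal.tsum_le_tsum fun n => ?_
        rw [hscale, mul_assoc, mul_right_comm]
        exact mul_le_mul_right (rpow_mul_measure_le_setLIntegral_Ico f (zpow_pos hb0 _)
          (zpow_le_zpow_right₀ hb.le (sub_one_lt n).le) hr hc) _
    _ ≤ _ := by
        rw [ENNReal.tsum_mul_left, ← lintegral_iUnion (fun _ => measurableSet_Ico) hdisj]
        exact mul_le_mul_right (setLIntegral_le_lintegral _ _) _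

lemma exists_pos_balance {x : ℝ≥0∞} (hx : x ≠ ⊤) {a b : ℝ} (ha : 0 < a) (hb : 0 < b) :
    ∃ β : ℝ, 0 < β ∧ ENNReal.ofReal β * x ^ a ≤ x ^ ((a + b) / 2) ∧
      ENNReal.ofReal β⁻¹ * x ^ b ≤ x ^ ((a + b) / 2) := by
  rcases eq_or_ne x 0 with rfl | hx0
  · exact ⟨1, one_pos, by simp [ha, hb]⟩
  lift x to NNReal using hx
  have hpos : 0 < (x : ℝ) := by exact_mod_cast pos_iff_ne_zero.2 hx0
  refine ⟨(x : ℝ) ^ ((b - a) / 2), by positivity, ?_, ?_⟩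
  · rw [← ENNReal.ofReal_rpow_of_pos hpos, ENNReal.ofReal_coe_nnreal,
      ← ENNReal.rpow_add _ _ hx0 ENNReal.coe_ne_top]
    exact (congrArg _ (by ring)).le
  · rw [← Real.rpow_neg hpos.le, ← ENNReal.ofReal_rpow_of_pos hpos, ENNReal.ofReal_coe_nnreal,
      ← ENNReal.rpow_add _ _ hx0 ENNReal.coe_ne_top]
    exact (congrArg _ (by ring)).le

lemma measurable_log_norm {h : α → ℂ} (hm : Measurable h) (b : ℕ) :
    Measurable fun x => Int.log b ‖h x‖ := by
  simp only [← Real.floor_logb_natCast (norm_nonneg _)]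
  exact ((Real.measurable_log.comp hm.norm).div_const _).floor

lemma norm_mem_Ico_zpow_log {z : ℂ} (hz : z ≠ 0) :
    ‖z‖ ∈ Set.Ico ((2 : ℝ) ^ Int.log 2 ‖z‖) (2 ^ (Int.log 2 ‖z‖ + 1)) :=
  ⟨by exact_mod_cast Int.zpow_log_le_self one_lt_two (norm_pos_iff.2 hz),
    by exact_mod_cast Int.lt_zpow_succ_log_self one_lt_two ‖z‖⟩

lemma tsum_two_zpow_mul_measure_le (f : α → ℂ) {c : ℝ} (hc : 0 ≤ c) :
    ∑' n : ℤ, ENNReal.ofReal √(2 ^ n) * ν {x | ENNReal.ofReal (2 ^ n) ≤ ‖f x‖ₑ} ^ c ≤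
      3 * ∫⁻ t, ENNReal.ofReal t ^ (1 / 2 : ℝ) * distribution ν f (ENNReal.ofReal t) ^ c
        ∂logMeasure := by
  have hconst : ENNReal.ofReal (2 ^ (1 / 2 : ℝ) * (2 / (2 - 1))) ≤ 3 := by
    rw [← Real.sqrt_eq_rpow, ENNReal.ofReal_le_ofNat]
    nlinarith [Real.sq_sqrt zero_le_two, Real.sqrt_nonneg 2]
  refine le_trans (le_of_eq ?_) ((tsum_zpow_mul_measure_le f one_lt_two one_half_pos.le hc).trans
    (mul_le_mul_left hconst _))
  refine tsum_congr fun n => ?_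
  rw [ENNReal.ofReal_rpow_of_nonneg (by positivity) one_half_pos.le, Real.sqrt_eq_rpow]

lemma exists_mul_eq_enorm_le {h : α → ℂ} (hm : Measurable h) {w : ℤ → ℝ} (hw : ∀ n, 0 < w n) :
    ∃ g k : α → ℂ, Measurable g ∧ Measurable k ∧ (∀ x, h x = g x * k x) ∧
      (∀ x, g x ≠ 0 → ∃ n : ℤ, ENNReal.ofReal (2 ^ n) ≤ ‖h x‖ₑ ∧
        ‖g x‖ₑ ≤ ENNReal.ofReal (w n)) ∧
      (∀ x, k x ≠ 0 → ∃ n : ℤ, ENNReal.ofReal (2 ^ n) ≤ ‖h x‖ₑ ∧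
        ‖k x‖ₑ ≤ ENNReal.ofReal (2 ^ (n + 1) / w n)) := by
  set v : α → ℂ := fun x => (w (Int.log 2 ‖h x‖) : ℝ)
  have hv : Measurable v :=
    Complex.measurable_ofReal.comp ((measurable_from_top (f := w)).comp (measurable_log_norm hm 2))
  have hvn : ∀ x, ‖v x‖ = w (Int.log 2 ‖h x‖) := fun x => by
    rw [Complex.norm_real, Real.norm_of_nonneg (hw _).le]
  have hlevel : ∀ x, h x ≠ 0 → ENNReal.ofReal (2 ^ Int.log 2 ‖h x‖) ≤ ‖h x‖ₑ := fun x hx => by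
    rw [← ofReal_norm]
    exact ENNReal.ofReal_le_ofReal (norm_mem_Ico_zpow_log hx).1
  refine ⟨fun x => if h x = 0 then 0 else v x, fun x => h x / v x,
    Measurable.ite (hm (measurableSet_singleton 0)) measurable_const hv, hm.div hv,
    fun x => ?_, fun x hx => ?_, fun x hx => ?_⟩
  · have hx : v x ≠ 0 := norm_pos_iff.1 (hvn x ▸ hw _)
    by_cases h0 : h x = 0
    · simp only [h0, if_true, zero_mul]
    · simp only [h0, if_false, mul_div_cancel₀ _ hx]
  · have h0 : h x ≠ 0 := fun h0 => hx (if_pos h0)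
    exact ⟨_, hlevel x h0, by beta_reduce; rw [if_neg h0, ← ofReal_norm, hvn]⟩
  · have h0 : h x ≠ 0 := left_ne_zero_of_mul hx
    refine ⟨_, hlevel x h0, ?_⟩
    rw [← ofReal_norm, norm_div, hvn]
    exact ENNReal.ofReal_le_ofReal
      (div_le_div_of_nonneg_right (norm_mem_Ico_zpow_log h0).2.le (hw _).le)

-- On the dyadic level `{2 ^ n ≤ ‖h‖ < 2 ^ (n + 1)}` take `‖g‖ = √(2 ^ n) * β n`, where `β n`
-- balances the `a`-th and the `b`-th power of the measure of `{2 ^ n ≤ ‖h‖}`.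
lemma exists_mul_eq_lintegral_distribution_le [IsFiniteMeasure ν] {h : α → ℂ} (hm : Measurable h)
    {a b : ℝ} (ha : 0 < a) (ha1 : a ≤ 1) (hb : 0 < b) (hb1 : b ≤ 1) :
    ∃ g k : α → ℂ, Measurable g ∧ Measurable k ∧ (∀ x, h x = g x * k x) ∧
      ∫⁻ t, ENNReal.ofReal t * distribution ν g (ENNReal.ofReal t) ^ a ∂logMeasure ≤
        3 * ∫⁻ t, ENNReal.ofReal t ^ (1 / 2 : ℝ) *
          distribution ν h (ENNReal.ofReal t) ^ ((a + b) / 2) ∂logMeasure ∧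
      ∫⁻ t, ENNReal.ofReal t * distribution ν k (ENNReal.ofReal t) ^ b ∂logMeasure ≤
        6 * ∫⁻ t, ENNReal.ofReal t ^ (1 / 2 : ℝ) *
          distribution ν h (ENNReal.ofReal t) ^ ((a + b) / 2) ∂logMeasure := by
  set E : ℤ → Set α := fun n => {x | ENNReal.ofReal (2 ^ n) ≤ ‖h x‖ₑ}
  have hS := tsum_two_zpow_mul_measure_le (ν := ν) h (add_pos ha hb |> half_pos).le
  choose β hβ hβa hβb using fun n => exists_pos_balance (measure_ne_top ν (E n)) ha hb
  obtain ⟨g, k, hg, hk, hgk, hgE, hkE⟩ := exists_mul_eq_enorm_le hm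
    (w := fun n => √(2 ^ n) * β n) fun n => mul_pos (by positivity) (hβ n)
  refine ⟨g, k, hg, hk, hgk, ?_, ?_⟩
  · refine (lintegral_mul_distribution_rpow_le_tsum (A := E) hgE ha ha1).trans (le_trans ?_ hS)
    refine ENNReal.tsum_le_tsum fun n => ?_
    rw [ENNReal.ofReal_mul (by positivity), mul_assoc]
    exact mul_le_mul_right (hβa n) _
  · refine (lintegral_mul_distribution_rpow_le_tsum (A := E) hkE hb hb1).trans ?_
    have hsqrt : ∀ n : ℤ, (2 : ℝ) ^ (n + 1) / (√(2 ^ n) * β n) = 2 * (√(2 ^ n) * (β n)⁻¹) := by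
      intro n
      rw [zpow_add_one₀ two_ne_zero, ← div_div, mul_comm ((2 : ℝ) ^ n), mul_div_assoc,
        Real.div_sqrt, mul_div_assoc, div_eq_mul_inv]
    rw [show (6 : ℝ≥0∞) = 2 * 3 by norm_num, mul_assoc]
    refine le_trans ?_ (mul_le_mul_right hS 2)
    rw [← ENNReal.tsum_mul_left]
    refine ENNReal.tsum_le_tsum fun n => ?_
    rw [hsqrt, ENNReal.ofReal_mul zero_le_two, ENNReal.ofReal_mul (by positivity),
      ENNReal.ofReal_ofNat, mul_assoc, mul_assoc]
    exact mul_le_mul_right (mul_le_mul_right (hβb n) _) _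

end Factorization

section Product

variable {p₁ p₂ p : ℝ≥0∞}

/-- Equivalence of two quasinorm functionals: the function spaces they define coincide. -/
def NormEquiv (N M : NormFn) : Prop :=
  ∃ c₁ c₂ : ℝ≥0∞, 0 < c₁ ∧ c₂ < ⊤ ∧
    ∀ h, AEStronglyMeasurable h μ → c₁ * M h ≤ N h ∧ N h ≤ c₂ * M h

lemma lorentzN_one_eq (hp0 : p ≠ 0) (hpt : p ≠ ⊤) (f : 𝕋 → ℂ) :
    lorentzN p 1 f = ENNReal.ofReal (1 / (1 / p).toReal) *
      ∫⁻ t, ENNReal.ofReal t * distribution μ f (ENNReal.ofReal t) ^ (1 / p).toReal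
        ∂logMeasure := by
  simp [lorentzN_eq_lintegral_distribution hp0 hpt]

lemma lorentzN_one_half_eq (hp0 : p ≠ 0) (hpt : p ≠ ⊤) (f : 𝕋 → ℂ) :
    lorentzN p (1 / 2) f = (ENNReal.ofReal (1 / (1 / p).toReal) *
      ∫⁻ t, ENNReal.ofReal t ^ (1 / 2 : ℝ) *
        distribution μ f (ENNReal.ofReal t) ^ ((1 / p).toReal / 2) ∂logMeasure) ^ 2 := by
  rw [lorentzN_eq_lintegral_distribution hp0 hpt (by simp) (by simp)]
  simp [ENNReal.mul_rpow_of_nonneg, ← ENNReal.rpow_mul, div_eq_mul_inv]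

lemma prodN_le {NX NY : NormFn} {g k h : 𝕋 → ℂ} (hg : AEStronglyMeasurable g μ)
    (hk : AEStronglyMeasurable k μ) (hgk : h =ᵐ[μ] fun t => g t * k t) :
    prodN NX NY h ≤ NX g * NY k :=
  iInf_le (fun d : {d : (𝕋 → ℂ) × (𝕋 → ℂ) // AEStronglyMeasurable d.1 μ ∧
    AEStronglyMeasurable d.2 μ ∧ h =ᵐ[μ] fun t => d.1 t * d.2 t} => NX d.1.1 * NY d.1.2)
    ⟨(g, k), hg, hk, hgk⟩

lemma ne_zero_and_ne_top_of_holderTriple (hp₁0 : p₁ ≠ 0) (hp₁t : p₁ ≠ ⊤) (hp₂0 : p₂ ≠ 0)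
    [ENNReal.HolderTriple p₁ p₂ p] : p ≠ 0 ∧ p ≠ ⊤ := by
  have hinv := ENNReal.HolderTriple.inv_add_inv_eq_inv p₁ p₂ p
  constructor <;> rintro rfl <;> simp_all

lemma lorentzN_one_half_le_prodN (hp₁ : p₁ ≠ 0) (hp₂ : p₂ ≠ 0) [ENNReal.HolderTriple p₁ p₂ p]
    (h : 𝕋 → ℂ) :
    lorentzN p (1 / 2) h ≤
      ENNReal.ofReal (2 ^ (1 / p).toReal) * prodN (lorentzN p₁ 1) (lorentzN p₂ 1) h := by
  have : ENNReal.HolderTriple 1 1 (1 / 2) := ⟨by norm_num [one_add_one_eq_two]⟩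
  have hc : ENNReal.ofReal (2 ^ (1 / p).toReal) ≠ 0 := (ENNReal.ofReal_pos.2 (by positivity)).ne'
  rw [prodN, ENNReal.mul_iInf_of_ne hc ENNReal.ofReal_ne_top]
  refine le_iInf fun ⟨⟨g, k⟩, _, _, hgk⟩ => ?_
  rw [lorentzN_congr p (1 / 2) hgk]
  exact lorentzN_mul_le hp₁ hp₂ one_ne_zero ENNReal.one_ne_top one_ne_zero ENNReal.one_ne_top g k

lemma prodN_le_lorentzN_one_half (hp₁ : 1 ≤ p₁) (hp₁t : p₁ ≠ ⊤) (hp₂ : 1 ≤ p₂) (hp₂t : p₂ ≠ ⊤)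
    [ENNReal.HolderTriple p₁ p₂ p] {h : 𝕋 → ℂ} (hh : AEStronglyMeasurable h μ) :
    prodN (lorentzN p₁ 1) (lorentzN p₂ 1) h ≤
      18 * ENNReal.ofReal (1 / (1 / p₁).toReal * (1 / (1 / p₂).toReal) * (1 / p).toReal ^ 2) *
        lorentzN p (1 / 2) h := by
  have hp₁0 := (one_pos.trans_le hp₁).ne'
  have hp₂0 := (one_pos.trans_le hp₂).ne'
  obtain ⟨hp0, hpt⟩ := ne_zero_and_ne_top_of_holderTriple (p := p) hp₁0 hp₁t hp₂0
  have hle_one {r : ℝ≥0∞} (hr : 1 ≤ r) : (1 / r).toReal ≤ 1 :=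
    ENNReal.toReal_le_of_le_ofReal zero_le_one (by simpa using hr)
  have ha := one_div_toReal_pos hp₁0 hp₁t
  have hb := one_div_toReal_pos hp₂0 hp₂t
  have hc := one_div_toReal_pos hp0 hpt
  obtain ⟨h₀, hm, hh₀⟩ := hh
  obtain ⟨g, k, hg, hk, hgk, hgJ, hkJ⟩ := exists_mul_eq_lintegral_distribution_le (ν := μ)
    hm.measurable ha (hle_one hp₁) hb (hle_one hp₂)
  rw [← one_div_toReal_add hp₁0 hp₂0 (p := p)] at hgJ hkJ
  have hprod : prodN (lorentzN p₁ 1) (lorentzN p₂ 1) h ≤ lorentzN p₁ 1 g * lorentzN p₂ 1 k :=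
    prodN_le hg.aestronglyMeasurable hk.aestronglyMeasurable (hh₀.trans (.of_forall hgk))
  rw [lorentzN_one_eq hp₁0 hp₁t, lorentzN_one_eq hp₂0 hp₂t] at hprod
  rw [lorentzN_congr _ _ hh₀, lorentzN_one_half_eq hp0 hpt]
  set J := ∫⁻ t, ENNReal.ofReal t ^ (1 / 2 : ℝ) *
    distribution μ h₀ (ENNReal.ofReal t) ^ ((1 / p).toReal / 2) ∂logMeasure
  refine (hprod.trans (mul_le_mul' (mul_le_mul_right hgJ _) (mul_le_mul_right hkJ _))).trans_eq ?_
  have hcancel :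
      ENNReal.ofReal (1 / p).toReal ^ 2 * ENNReal.ofReal (1 / (1 / p).toReal) ^ 2 = 1 := by
    rw [← mul_pow, ← ENNReal.ofReal_mul hc.le, mul_one_div_cancel hc.ne', ENNReal.ofReal_one,
      one_pow]
  rw [ENNReal.ofReal_mul (by positivity), ENNReal.ofReal_mul (by positivity),
    ENNReal.ofReal_pow hc.le]
  calc _ = 18 * ENNReal.ofReal (1 / (1 / p₁).toReal) * ENNReal.ofReal (1 / (1 / p₂).toReal) *
        (ENNReal.ofReal (1 / p).toReal ^ 2 * ENNReal.ofReal (1 / (1 / p).toReal) ^ 2) * J ^ 2 := by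
          rw [hcancel]; ring
    _ = _ := by ring

lemma normEquiv_prodN_lorentzN_one (hp₁ : 1 ≤ p₁) (hp₁t : p₁ ≠ ⊤) (hp₂ : 1 ≤ p₂) (hp₂t : p₂ ≠ ⊤)
    [ENNReal.HolderTriple p₁ p₂ p] :
    NormEquiv (prodN (lorentzN p₁ 1) (lorentzN p₂ 1)) (lorentzN p (1 / 2)) := by
  have hc : 0 < ENNReal.ofReal (2 ^ (1 / p).toReal) := ENNReal.ofReal_pos.2 (by positivity)
  refine ⟨(ENNReal.ofReal (2 ^ (1 / p).toReal))⁻¹, _, ENNReal.inv_pos.2 ENNReal.ofReal_ne_top,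
    ENNReal.mul_lt_top (by finiteness) ENNReal.ofReal_lt_top,
    fun h hh => ⟨?_, prodN_le_lorentzN_one_half hp₁ hp₁t hp₂ hp₂t hh⟩⟩
  rw [ENNReal.inv_mul_le_iff hc.ne' ENNReal.ofReal_ne_top]
  exact lorentzN_one_half_le_prodN (one_pos.trans_le hp₁).ne' (one_pos.trans_le hp₂).ne' h

end Product

section Angle

/-- The representative of a point of the circle in `[0, 2π)`. -/
def angle (x : 𝕋) : ℝ := AddCircle.equivIco (2 * Real.pi) 0 x

lemma angle_mem_Ico (x : 𝕋) : angle x ∈ Set.Ico 0 (2 * Real.pi) := by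
  simpa only [zero_add] using! (AddCircle.equivIco (2 * Real.pi) 0 x).2

lemma coe_angle (x : 𝕋) : (angle x : 𝕋) = x :=
  (AddCircle.equivIco (2 * Real.pi) 0).symm_apply_apply x

lemma angle_coe {y : ℝ} (hy : y ∈ Set.Ico 0 (2 * Real.pi)) : angle y = y := by
  rw [angle, AddCircle.equivIco_coe_eq (by rwa [zero_add])]

lemma measurableEmbedding_angle : MeasurableEmbedding angle :=
  (MeasurableEmbedding.subtype_coe measurableSet_Ico).comp
    (AddCircle.measurableEquivIco (2 * Real.pi) 0).measurableEmbedding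

lemma measurable_angle : Measurable angle := measurableEmbedding_angle.measurable

lemma μ_eq_smul_volume : μ = ENNReal.ofReal (2 * Real.pi)⁻¹ • (volume : Measure 𝕋) := by
  rw [AddCircle.volume_eq_smul_haarAddCircle, smul_smul, ← ENNReal.ofReal_mul (by positivity),
    inv_mul_cancel₀ (by positivity), ENNReal.ofReal_one, one_smul, μ]

lemma μ_preimage_angle (A : Set ℝ) : μ (angle ⁻¹' A) =
    ENNReal.ofReal (2 * Real.pi)⁻¹ * volume (A ∩ Set.Ico 0 (2 * Real.pi)) := by
  suffices hmap : μ.map angle =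
      ENNReal.ofReal (2 * Real.pi)⁻¹ • volume.restrict (Set.Ico 0 (2 * Real.pi)) by
    rw [← measurableEmbedding_angle.map_apply, hmap, Measure.smul_apply,
      Measure.restrict_apply' measurableSet_Ico, smul_eq_mul]
  have hmk := (AddCircle.measurePreserving_mk (2 * Real.pi) 0).map_eq
  rw [zero_add, ← restrict_Ico_eq_restrict_Ioc] at hmk
  rw [μ_eq_smul_volume, Measure.map_smul, ← hmk,
    Measure.map_map measurable_angle AddCircle.measurable_mk']
  congr 1
  refine (Measure.map_congr ?_).trans Measure.map_id
  filter_upwards [ae_restrict_mem measurableSet_Ico] with y hy using angle_coe hy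

end Angle

section Dilation

variable {f g : 𝕋 → ℂ} {s : ℝ}

lemma dilOp_apply (s : ℝ) (f : 𝕋 → ℂ) (x : 𝕋) : dilOp s f x =
    if s * angle x ∈ Set.Ico 0 (2 * Real.pi) then f (s * angle x : ℝ) else 0 := rfl

lemma dilOp_smul (s : ℝ) (z : ℂ) (f : 𝕋 → ℂ) : dilOp s (z • f) = z • dilOp s f := by
  ext x
  simp [dilOp_apply]

lemma dilOp_one (f : 𝕋 → ℂ) : dilOp 1 f = f := by
  ext x
  simp only [dilOp_apply, one_mul, angle_mem_Ico, if_true, coe_angle]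

lemma dilOp_dilOp_dilOp_one {a b : ℝ} (ha : 0 < a) (ha1 : a ≤ 1) (hb1 : 1 ≤ b) :
    dilOp a (dilOp (1 / (a * b)) (dilOp b 1)) = 1 := by
  ext x
  have hb : 0 < b := one_pos.trans_le hb1
  obtain ⟨hx, hx'⟩ := angle_mem_Ico x
  have h₁ : a * angle x ∈ Set.Ico 0 (2 * Real.pi) :=
    ⟨by positivity, (mul_le_of_le_one_left hx ha1).trans_lt hx'⟩
  have hcancel : 1 / (a * b) * (a * angle x) = angle x / b := by field_simp
  have h₂ : angle x / b ∈ Set.Ico 0 (2 * Real.pi) :=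
    ⟨by positivity, (div_le_self hx hb1).trans_lt hx'⟩
  rw [dilOp_apply, if_pos h₁, dilOp_apply, angle_coe h₁, hcancel, if_pos h₂, dilOp_apply,
    angle_coe h₂, mul_div_cancel₀ _ hb.ne', if_pos (angle_mem_Ico x), Pi.one_apply, Pi.one_apply]

lemma μ_setOf_mul_angle_le (hs : 0 < s) (S : Set 𝕋) :
    μ {x | s * angle x ∈ Set.Ico 0 (2 * Real.pi) ∧ ((s * angle x : ℝ) : 𝕋) ∈ S} ≤
      ENNReal.ofReal s⁻¹ * μ S := by
  have hS : S = angle ⁻¹' ((↑) ⁻¹' S) := by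
    ext x
    simp only [Set.mem_preimage, coe_angle]
  have hpre : {x | s * angle x ∈ Set.Ico 0 (2 * Real.pi) ∧ ((s * angle x : ℝ) : 𝕋) ∈ S} =
      angle ⁻¹' ((s * ·) ⁻¹' ((↑) ⁻¹' S ∩ Set.Ico 0 (2 * Real.pi))) := by
    ext x
    exact and_comm
  conv_rhs => rw [hS, μ_preimage_angle, mul_left_comm]
  rw [hpre, μ_preimage_angle]
  refine mul_le_mul_right ((measure_mono Set.inter_subset_left).trans ?_) _
  rw [Real.volume_preimage_mul_left hs.ne', abs_of_pos (inv_pos.2 hs)]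

lemma distribution_dilOp_le (hs : 0 < s) (f : 𝕋 → ℂ) (l : ℝ≥0∞) :
    distribution μ (dilOp s f) l ≤ ENNReal.ofReal s⁻¹ * distribution μ f l := by
  refine (measure_mono fun x (hx : l < _) => ?_).trans (μ_setOf_mul_angle_le hs _)
  rw [dilOp_apply] at hx
  split_ifs at hx with hsx
  · exact ⟨hsx, hx⟩
  · simp at hx

lemma decRearr_dilOp_le (hs : 0 < s) (f : 𝕋 → ℂ) (t : ℝ) :
    decRearr (dilOp s f) t ≤ decRearr f (s * t) := by
  rw [decRearr_le_iff]
  refine (distribution_dilOp_le hs f _).trans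
    ((mul_le_mul_right (distribution_decRearr_le f _) _).trans_eq ?_)
  rw [← ENNReal.ofReal_mul (by positivity), inv_mul_cancel_left₀ hs.ne']

lemma dilOp_congr (hs : 0 < s) (hfg : f =ᵐ[μ] g) : dilOp s f =ᵐ[μ] dilOp s g := by
  refine measure_mono_null (fun x (hx : dilOp s f x ≠ dilOp s g x) => ?_)
    (nonpos_iff_eq_zero.1 ((μ_setOf_mul_angle_le hs {x | f x ≠ g x}).trans_eq
      (by rw [show μ {x | f x ≠ g x} = 0 from hfg, mul_zero])))
  rw [dilOp_apply, dilOp_apply] at hx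
  split_ifs at hx with hsx
  · exact ⟨hsx, hx⟩
  · exact absurd rfl hx

lemma aestronglyMeasurable_dilOp (hs : 0 < s) (hf : AEStronglyMeasurable f μ) :
    AEStronglyMeasurable (dilOp s f) μ := by
  obtain ⟨g, hg, hfg⟩ := hf
  refine AEStronglyMeasurable.congr (Measurable.aestronglyMeasurable ?_) (dilOp_congr hs hfg).symm
  exact Measurable.ite ((measurable_angle.const_mul s) measurableSet_Ico)
    (hg.measurable.comp (AddCircle.measurable_mk'.comp (measurable_angle.const_mul s)))
    measurable_const

end Dilation

section Boyd

variable {N M : NormFn} {f : 𝕋 → ℂ} {c : ℝ} {p q : ℝ≥0∞}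

lemma le_mul_opN {N₁ N₂ : NormFn} {T : (𝕋 → ℂ) → 𝕋 → ℂ} {K₁ K₂ : ℝ≥0∞} (hK₁0 : K₁ ≠ 0)
    (hK₁t : K₁ ≠ ⊤) (hf : AEStronglyMeasurable f μ) (hf0 : N₁ f ≠ 0) (hft : N₁ f ≠ ⊤)
    (hT : ∀ z : ℂ, T (z • f) = z • T f) (h₁ : ∀ z : ℂ, N₁ (z • f) ≤ K₁ * ‖z‖ₑ * N₁ f)
    (h₂ : ∀ w z : ℂ, N₂ (w • z • T f) ≤ K₂ * ‖w‖ₑ * N₂ (z • T f)) :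
    N₂ (T f) ≤ K₁ * K₂ * opN N₁ N₂ T * N₁ f := by
  have hKf0 : K₁ * N₁ f ≠ 0 := mul_ne_zero hK₁0 hf0
  have hKft : K₁ * N₁ f ≠ ⊤ := ENNReal.mul_ne_top hK₁t hft
  let z : ℂ := ((K₁ * N₁ f)⁻¹.toReal : ℝ)
  have hz : ‖z‖ₑ = (K₁ * N₁ f)⁻¹ := by
    rw [← ofReal_norm, Complex.norm_real, Real.norm_of_nonneg ENNReal.toReal_nonneg,
      ENNReal.ofReal_toReal (ENNReal.inv_ne_top.2 hKf0)]
  have hball : z • f ∈ unitBall N₁ := by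
    refine ⟨hf.const_smul z, (h₁ z).trans_eq ?_⟩
    rw [mul_right_comm, hz, ENNReal.mul_inv_cancel hKf0 hKft]
  have hz0 : z ≠ 0 := enorm_ne_zero.1 (hz ▸ ENNReal.inv_ne_zero.2 hKft)
  have hopN : N₂ (z • T f) ≤ opN N₁ N₂ T :=
    hT z ▸ le_iSup (fun g : unitBall N₁ => N₂ (T g)) ⟨_, hball⟩
  calc N₂ (T f) ≤ K₂ * ‖z⁻¹‖ₑ * N₂ (z • T f) := by
        simpa only [inv_smul_smul₀ hz0] using h₂ z⁻¹ z
    _ ≤ K₂ * (K₁ * N₁ f) * opN N₁ N₂ T := by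
        rw [enorm_inv hz0, hz, inv_inv]
        gcongr
    _ = _ := by ring

-- The function `D_{max 1 s} 1` is, up to constants, extremal for `D_{1/s}`.
lemma ofReal_rpow_le_dilNorm {K : ℝ≥0∞} {s : ℝ} (hN0 : N 1 ≠ 0) (hNt : N 1 ≠ ⊤) (hKt : K ≠ ⊤)
    (hsmul : ∀ f, AEStronglyMeasurable f μ → ∀ z : ℂ, N (z • f) ≤ K * ‖z‖ₑ * N f)
    (hdil : ∀ f, AEStronglyMeasurable f μ → ∀ s > 0,
      N (dilOp s f) ≤ K * ENNReal.ofReal (s ^ (-c)) * N f) (hs : 0 < s) :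
    ENNReal.ofReal (s ^ c) ≤ K ^ 4 * dilNorm N (1 / s) := by
  have hK0 : K ≠ 0 := by
    rintro rfl
    exact hN0 (by simpa using hsmul 1 aestronglyMeasurable_one 1)
  have ha : 0 < min 1 s := lt_min one_pos hs
  have hb : 0 < max 1 s := one_pos.trans_le (le_max_left 1 s)
  let u := dilOp (max 1 s) 1
  have hu : AEStronglyMeasurable u μ := aestronglyMeasurable_dilOp hb aestronglyMeasurable_one
  have hNu : N u ≤ K * ENNReal.ofReal (max 1 s ^ (-c)) * N 1 := hdil 1 aestronglyMeasurable_one _ hb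
  have hN1 : N 1 ≤ K * ENNReal.ofReal (min 1 s ^ (-c)) * N (dilOp (1 / s) u) := by
    have hone : dilOp (min 1 s) (dilOp (1 / s) u) = 1 := by
      simpa only [min_mul_max, one_mul] using
        dilOp_dilOp_dilOp_one ha (min_le_left 1 s) (le_max_left 1 s)
    exact hone ▸ hdil _ (aestronglyMeasurable_dilOp (one_div_pos.2 hs) hu) _ ha
  have hNu0 : N u ≠ 0 := fun h0 => hN0 <| by
    have hNv := hdil u hu _ (one_div_pos.2 hs)
    rw [h0, mul_zero, nonpos_iff_eq_zero] at hNv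
    rwa [hNv, mul_zero, nonpos_iff_eq_zero] at hN1
  have hNut : N u ≠ ⊤ := (hNu.trans_lt (ENNReal.mul_lt_top (by finiteness) hNt.lt_top)).ne
  have hNv : N (dilOp (1 / s) u) ≤ K * K * dilNorm N (1 / s) * N u :=
    le_mul_opN hK0 hKt hu hNu0 hNut (fun z => dilOp_smul _ z u) (hsmul u hu) fun w z =>
      hsmul _ ((aestronglyMeasurable_dilOp (one_div_pos.2 hs) hu).const_smul z) w
  have hexp : ENNReal.ofReal (min 1 s ^ (-c)) * ENNReal.ofReal (max 1 s ^ (-c)) =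
      (ENNReal.ofReal (s ^ c))⁻¹ := by
    rw [← ENNReal.ofReal_mul (by positivity), ← Real.mul_rpow ha.le hb.le, min_mul_max, one_mul,
      Real.rpow_neg hs.le, ENNReal.ofReal_inv_of_pos (by positivity)]
  have hcycle : 1 * N 1 ≤ (ENNReal.ofReal (s ^ c))⁻¹ * (K ^ 4 * dilNorm N (1 / s)) * N 1 := by
    calc 1 * N 1 ≤ K * ENNReal.ofReal (min 1 s ^ (-c)) * (K * K * dilNorm N (1 / s) *
          (K * ENNReal.ofReal (max 1 s ^ (-c)) * N 1)) := by
          rw [one_mul]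
          exact hN1.trans (mul_le_mul_right (hNv.trans (mul_le_mul_right hNu _)) _)
      _ = _ := by rw [← hexp]; ring
  have hsc : ENNReal.ofReal (s ^ c) ≠ 0 := (ENNReal.ofReal_pos.2 (by positivity)).ne'
  rwa [ENNReal.mul_le_mul_iff_left hN0 hNt, mul_comm, ← div_eq_mul_inv,
    ENNReal.le_div_iff_mul_le (.inl hsc) (.inl ENNReal.ofReal_ne_top), one_mul] at hcycle

/-- The dilation `D_s` has norm of order `s ^ (-c)` on the space of `N`. A single constant `K`
bounds scalar multiples and dilations, so that the notion is stable under equivalence. -/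
structure HasDilationExponent (N : NormFn) (c : ℝ) : Prop where
  one_ne_zero : N 1 ≠ 0
  one_ne_top : N 1 ≠ ⊤
  exists_smul_dilOp_le : ∃ K : ℝ≥0∞, K ≠ ⊤ ∧ ∀ f, AEStronglyMeasurable f μ → ∀ z : ℂ, ∀ s > 0,
    N (z • dilOp s f) ≤ K * ‖z‖ₑ * ENNReal.ofReal (s ^ (-c)) * N f

namespace HasDilationExponent

lemma of_normEquiv (hM : HasDilationExponent M c) (hNM : NormEquiv N M) :
    HasDilationExponent N c := by
  obtain ⟨c₁, c₂, hc₁, hc₂, hequiv⟩ := hNM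
  obtain ⟨K, hK, hdil⟩ := hM.exists_smul_dilOp_le
  have hone := hequiv 1 aestronglyMeasurable_one
  have hmin0 : min c₁ 1 ≠ 0 := (lt_min hc₁ one_pos).ne'
  have hmint : min c₁ 1 ≠ ⊤ := ((min_le_right _ _).trans_lt ENNReal.one_lt_top).ne
  have hMN : ∀ f, AEStronglyMeasurable f μ → M f ≤ (min c₁ 1)⁻¹ * N f := fun f hf => by
    rw [← ENNReal.mul_le_iff_le_inv hmin0 hmint]
    exact (mul_le_mul_left (min_le_left _ _) _).trans (hequiv f hf).1
  refine ⟨((ENNReal.mul_pos hc₁.ne' hM.one_ne_zero).trans_le hone.1).ne',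
    (hone.2.trans_lt (ENNReal.mul_lt_top hc₂ hM.one_ne_top.lt_top)).ne,
    c₂ * K * (min c₁ 1)⁻¹,
    ENNReal.mul_ne_top (ENNReal.mul_ne_top hc₂.ne hK) (ENNReal.inv_ne_top.2 hmin0),
    fun f hf z s hs => ?_⟩
  calc N (z • dilOp s f) ≤ c₂ * M (z • dilOp s f) :=
        (hequiv _ ((aestronglyMeasurable_dilOp hs hf).const_smul z)).2
    _ ≤ c₂ * (K * ‖z‖ₑ * ENNReal.ofReal (s ^ (-c)) * ((min c₁ 1)⁻¹ * N f)) := by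
        gcongr
        exact (hdil f hf z s hs).trans (mul_le_mul_right (hMN f hf) _)
    _ = _ := by ring

lemma exists_dilNorm_bounds (hN : HasDilationExponent N c) : ∃ K : ℝ≥0∞, K ≠ ⊤ ∧ ∀ s > 0,
    dilNorm N (1 / s) ≤ K * ENNReal.ofReal (s ^ c) ∧
      ENNReal.ofReal (s ^ c) ≤ K ^ 4 * dilNorm N (1 / s) := by
  obtain ⟨K, hKt, hsmul_dil⟩ := hN.exists_smul_dilOp_le
  have hsmul : ∀ f, AEStronglyMeasurable f μ → ∀ z : ℂ, N (z • f) ≤ K * ‖z‖ₑ * N f :=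
    fun f hf z => by simpa [dilOp_one] using hsmul_dil f hf z 1 one_pos
  have hdil : ∀ f, AEStronglyMeasurable f μ → ∀ s > 0,
      N (dilOp s f) ≤ K * ENNReal.ofReal (s ^ (-c)) * N f := fun f hf s hs => by
    simpa using hsmul_dil f hf 1 s hs
  refine ⟨K, hKt, fun s hs => ⟨iSup_le fun f => ?_,
    ofReal_rpow_le_dilNorm hN.one_ne_zero hN.one_ne_top hKt hsmul hdil hs⟩⟩
  refine (hdil f f.2.1 _ (one_div_pos.2 hs)).trans ?_
  rw [one_div, Real.inv_rpow hs.le, Real.rpow_neg hs.le, inv_inv]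
  exact mul_le_of_le_one_right' f.2.2

lemma exists_abs_log_dilNorm_sub_le (hN : HasDilationExponent N c) :
    ∃ C : ℝ, ∀ s > 0, |Real.log (dilNorm N (1 / s)).toReal - c * Real.log s| ≤ C := by
  obtain ⟨K, hK, hbounds⟩ := hN.exists_dilNorm_bounds
  refine ⟨4 * |Real.log K.toReal|, fun s hs => ?_⟩
  obtain ⟨hle, hge⟩ := hbounds s hs
  have hsc : 0 < s ^ c := Real.rpow_pos_of_pos hs c
  have hD : dilNorm N (1 / s) ≠ ⊤ := (hle.trans_lt (by finiteness)).ne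
  replace hle := ENNReal.toReal_mono (by finiteness) hle
  replace hge := ENNReal.toReal_mono (by finiteness) hge
  rw [ENNReal.toReal_mul, ENNReal.toReal_ofReal hsc.le] at hle hge
  rw [ENNReal.toReal_pow] at hge
  have hKpos : 0 < K.toReal := by
    refine ENNReal.toReal_nonneg.lt_of_ne' fun h0 => ?_
    rw [h0, zero_pow four_ne_zero, zero_mul] at hge
    exact hge.not_gt hsc
  have hDpos : 0 < (dilNorm N (1 / s)).toReal :=
    pos_of_mul_pos_right (hsc.trans_le hge) (by positivity)
  have hlog_le := Real.log_le_log hDpos hle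
  have hlog_ge := Real.log_le_log hsc hge
  rw [Real.log_mul hKpos.ne' hsc.ne', Real.log_rpow hs] at hlog_le
  rw [Real.log_mul (by positivity) hDpos.ne', Real.log_pow, Real.log_rpow hs] at hlog_ge
  push_cast at hlog_ge
  rw [abs_le]
  constructor <;> linarith [le_abs_self (Real.log K.toReal), abs_nonneg (Real.log K.toReal)]

lemma tendsto_log_dilNorm_div_log (hN : HasDilationExponent N c) {l : Filter ℝ}
    (hpos : ∀ᶠ s in l, 0 < s) (hlog : Tendsto (fun s => |Real.log s|) l atTop) :
    Tendsto (fun s => Real.log (dilNorm N (1 / s)).toReal / Real.log s) l (𝓝 c) := by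
  obtain ⟨C, hC⟩ := hN.exists_abs_log_dilNorm_sub_le
  rw [tendsto_iff_norm_sub_tendsto_zero]
  refine squeeze_zero' (.of_forall fun s => norm_nonneg _) ?_ (hlog.const_div_atTop C)
  filter_upwards [hpos, hlog.eventually_gt_atTop 0] with s hs hlogs
  have hlog0 : Real.log s ≠ 0 := abs_pos.1 hlogs
  rw [Real.norm_eq_abs, div_sub' hlog0, abs_div, mul_comm]
  gcongr
  exact hC s hs

lemma boydUpper (hN : HasDilationExponent N c) : boydUpper N c :=
  hN.tendsto_log_dilNorm_div_log (eventually_gt_atTop 0)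
    (tendsto_abs_atTop_atTop.comp Real.tendsto_log_atTop)

lemma boydLower (hN : HasDilationExponent N c) : boydLower N c :=
  hN.tendsto_log_dilNorm_div_log self_mem_nhdsWithin
    (tendsto_abs_atBot_atTop.comp Real.tendsto_log_nhdsGT_zero)

end HasDilationExponent

lemma hasDilationExponent_lorentzN (hp0 : p ≠ 0) (hpt : p ≠ ⊤) (hq0 : q ≠ 0) :
    HasDilationExponent (lorentzN p q) (1 / p).toReal := by
  have hone : (1 : 𝕋 → ℂ) = Set.univ.indicator 1 := (Set.indicator_univ 1).symm
  have hone_mem : lorentzN p q 1 ≠ 0 ∧ lorentzN p q 1 ≠ ⊤ := by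
    rcases eq_or_ne q ⊤ with rfl | hqt
    · rw [hone, lorentzN_top_indicator_one hp0 hpt, measure_univ, ENNReal.one_rpow]
      exact ⟨one_ne_zero, ENNReal.one_ne_top⟩
    · have ha := one_div_toReal_pos hp0 hpt
      have hq := ENNReal.toReal_pos hq0 hqt
      rw [hone, lorentzN_indicator_one hp0 hpt hq0 hqt, measure_univ, ENNReal.one_rpow, mul_one]
      have hconst : 0 < ENNReal.ofReal (1 / ((1 / p).toReal * q.toReal)) :=
        ENNReal.ofReal_pos.2 (by positivity)
      exact ⟨(ENNReal.rpow_pos hconst ENNReal.ofReal_ne_top).ne', by finiteness⟩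
  refine ⟨hone_mem.1, hone_mem.2, 1, ENNReal.one_ne_top, fun f _ z s hs => ?_⟩
  rw [one_mul]
  exact lorentzN_le_of_decRearr_le hq0 hs fun t _ =>
    (decRearr_const_mul_le z _ t).trans (mul_le_mul_right (decRearr_dilOp_le hs f t) _)

end Boyd

section Multiplier

variable {p₁ p q r : ℝ≥0∞}

lemma lorentzN_indicator (hp0 : p ≠ 0) (hpt : p ≠ ⊤) (hq0 : q ≠ 0) (A : Set 𝕋) :
    lorentzN p q (A.indicator 1) = lorentzN p q 1 * μ A ^ (1 / p).toReal := by
  have hone : (1 : 𝕋 → ℂ) = Set.univ.indicator 1 := (Set.indicator_univ 1).symm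
  conv_rhs => rw [hone]
  rcases eq_or_ne q ⊤ with rfl | hqt
  · simp only [lorentzN_top_indicator_one hp0 hpt, measure_univ, ENNReal.one_rpow, one_mul]
  · simp only [lorentzN_indicator_one hp0 hpt hq0 hqt, measure_univ, ENNReal.one_rpow, mul_one]

lemma lorentzN_mul_le_multN_mul (hq0 : q ≠ 0) (hr0 : r ≠ 0) (m : 𝕋 → ℂ) {f : 𝕋 → ℂ}
    (hf : AEStronglyMeasurable f μ) (hf0 : lorentzN p₁ q f ≠ 0) (hft : lorentzN p₁ q f ≠ ⊤) :
    lorentzN p r (fun t => m t * f t) ≤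
      multN (lorentzN p₁ q) (lorentzN p r) m * lorentzN p₁ q f := by
  have hle : lorentzN p r (fun t => m t * f t) ≤
      1 * 1 * multN (lorentzN p₁ q) (lorentzN p r) m * lorentzN p₁ q f := by
    refine le_mul_opN (T := fun f t => m t * f t) one_ne_zero ENNReal.one_ne_top hf hf0 hft
      (fun z => ?_) (fun z => ?_) fun w z => ?_
    · ext t
      simp [mul_left_comm]
    · rw [one_mul]
      exact lorentzN_const_mul_le hq0 p₁ z f
    · rw [one_mul]
      exact lorentzN_const_mul_le hr0 p w _
  rwa [one_mul, one_mul] at hle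

-- Test the multiplier on the indicators of its own superlevel sets.
lemma lorentzN_top_le_multN (hp₁0 : p₁ ≠ 0) (hp₁t : p₁ ≠ ⊤) (hr0 : r ≠ 0) (hrt : r ≠ ⊤)
    [ENNReal.HolderTriple p₁ r p] (hq0 : q ≠ 0) {m : 𝕋 → ℂ} (hm : AEStronglyMeasurable m μ) :
    lorentzN r ⊤ m ≤ lorentzN p₁ q 1 * multN (lorentzN p₁ q) (lorentzN p ⊤) m := by
  obtain ⟨hp0, hpt⟩ := ne_zero_and_ne_top_of_holderTriple (p := p) hp₁0 hp₁t hr0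
  obtain ⟨hone0, honet, -⟩ := hasDilationExponent_lorentzN hp₁0 hp₁t hq0
  have ha := one_div_toReal_pos hp₁0 hp₁t
  have hrpos := one_div_toReal_pos hr0 hrt
  rw [lorentzN_top_eq_iSup_distribution hr0 hrt]
  refine iSup_le fun l => ?_
  let A := {x | l < ‖m x‖ₑ}
  change l * μ A ^ (1 / r).toReal ≤ _
  rcases eq_or_ne (μ A) 0 with hA0 | hA0
  · rw [hA0, ENNReal.zero_rpow_of_pos hrpos, mul_zero]
    exact zero_le
  have hA : NullMeasurableSet A μ := nullMeasurableSet_lt aemeasurable_const hm.enorm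
  have hApos : 0 < μ A ^ (1 / p₁).toReal :=
    ENNReal.rpow_pos (pos_iff_ne_zero.2 hA0) (measure_ne_top μ A)
  have hnorm := lorentzN_indicator hp₁0 hp₁t hq0 A
  have hlevel : μ A ≤ distribution μ (fun t => m t * A.indicator 1 t) l :=
    measure_mono fun t (ht : t ∈ A) => by simpa [Set.indicator_of_mem ht] using! ht
  rw [← ENNReal.mul_le_mul_iff_left hApos.ne' (by finiteness)]
  calc l * μ A ^ (1 / r).toReal * μ A ^ (1 / p₁).toReal = l * μ A ^ (1 / p).toReal := by
        rw [one_div_toReal_add (p := p) hp₁0 hr0, ENNReal.rpow_add_of_nonneg _ _ ha.le hrpos.le]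
        ring
    _ ≤ lorentzN p ⊤ (fun t => m t * A.indicator 1 t) := by
        rw [lorentzN_top_eq_iSup_distribution hp0 hpt]
        refine le_iSup_of_le l ?_
        gcongr
    _ ≤ multN (lorentzN p₁ q) (lorentzN p ⊤) m * lorentzN p₁ q (A.indicator 1) :=
        lorentzN_mul_le_multN_mul hq0 ENNReal.top_ne_zero m
          (aestronglyMeasurable_const.indicator₀ hA)
          (hnorm ▸ mul_ne_zero hone0 hApos.ne') (hnorm ▸ ENNReal.mul_ne_top honet (by finiteness))
    _ = _ := by rw [hnorm]; ring

lemma lorentzN_le_prodN_multN (hp₁0 : p₁ ≠ 0) (hp₁t : p₁ ≠ ⊤) (hr0 : r ≠ 0) (hrt : r ≠ ⊤)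
    [ENNReal.HolderTriple p₁ r p] (hq0 : q ≠ 0) (hqt : q ≠ ⊤) (h : 𝕋 → ℂ) :
    lorentzN p q h ≤ ENNReal.ofReal (2 ^ (1 / p).toReal) * lorentzN p₁ q 1 *
      prodN (lorentzN p₁ q) (multN (lorentzN p₁ q) (lorentzN p ⊤)) h := by
  obtain ⟨hone0, honet, -⟩ := hasDilationExponent_lorentzN hp₁0 hp₁t hq0
  have htwo : 0 < ENNReal.ofReal (2 ^ (1 / p).toReal) := ENNReal.ofReal_pos.2 (by positivity)
  rw [prodN, ENNReal.mul_iInf_of_ne (mul_ne_zero htwo.ne' hone0) (by finiteness)]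
  refine le_iInf fun ⟨⟨g, m⟩, _, hm, hgm⟩ => ?_
  rw [lorentzN_congr p q hgm]
  refine (lorentzN_mul_le_mul_lorentzN_top hp₁0 hr0 hq0 hqt g m).trans ?_
  calc _ ≤ ENNReal.ofReal (2 ^ (1 / p).toReal) * (lorentzN p₁ q g *
        (lorentzN p₁ q 1 * multN (lorentzN p₁ q) (lorentzN p ⊤) m)) := by
        gcongr
        exact lorentzN_top_le_multN hp₁0 hp₁t hr0 hrt hq0 hm
    _ = _ := by ring

/-- The power `(θ / 2π) ^ (-b)` on the circle, the extremal function of `L^{1/b,∞}`; its value at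
`θ = 0` is `0`. -/
def anglePower (b : ℝ) : 𝕋 → ℂ := fun x => ((angle x / (2 * Real.pi)) ^ (-b) : ℝ)

lemma measurable_anglePower (b : ℝ) : Measurable (anglePower b) :=
  Complex.measurable_ofReal.comp ((measurable_angle.div_const _).pow_const _)

lemma enorm_anglePower (b : ℝ) (x : 𝕋) :
    ‖anglePower b x‖ₑ = ENNReal.ofReal ((angle x / (2 * Real.pi)) ^ (-b)) := by
  have hx := (angle_mem_Ico x).1
  rw [← ofReal_norm, anglePower, Complex.norm_real, Real.norm_of_nonneg (by positivity)]

lemma μ_preimage_angle_Ioo (x : ℝ) :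
    μ (angle ⁻¹' Set.Ioo 0 (2 * Real.pi * x)) = ENNReal.ofReal (min x 1) := by
  have hpi := Real.two_pi_pos
  have hinter : Set.Ioo 0 (2 * Real.pi * x) ∩ Set.Ico 0 (2 * Real.pi) =
      Set.Ioo 0 (2 * Real.pi * min x 1) := by
    ext y
    rw [mul_min_of_nonneg _ _ hpi.le, mul_one]
    simp only [Set.mem_inter_iff, Set.mem_Ioo, Set.mem_Ico, lt_min_iff]
    grind
  rw [μ_preimage_angle, hinter, Real.volume_Ioo, sub_zero, ← ENNReal.ofReal_mul (by positivity),
    inv_mul_cancel_left₀ hpi.ne']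

lemma distribution_anglePower {b t : ℝ} (hb : 0 < b) (ht : 0 < t) :
    distribution μ (anglePower b) (ENNReal.ofReal t) = ENNReal.ofReal (min (t ^ (-b⁻¹)) 1) := by
  have hpi := Real.two_pi_pos
  rw [← μ_preimage_angle_Ioo]
  refine congrArg μ (Set.ext fun x => ?_)
  simp only [Set.mem_ofPred_eq, Set.mem_preimage, Set.mem_Ioo, enorm_anglePower]
  rcases (angle_mem_Ico x).1.eq_or_lt with hx | hx
  · simp [← hx, Real.zero_rpow (neg_ne_zero.2 hb.ne')]
  · have ht_rpow : (t ^ (-b⁻¹)) ^ (-b) = t := by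
      rw [← Real.rpow_mul ht.le, neg_mul_neg, inv_mul_cancel₀ hb.ne', Real.rpow_one]
    rw [ENNReal.ofReal_lt_ofReal_iff (by positivity), ← div_lt_iff₀' hpi]
    conv_lhs => rw [← ht_rpow]
    rw [Real.rpow_lt_rpow_iff_of_neg (by positivity) (by positivity) (by linarith)]
    exact (and_iff_right hx).symm

lemma lorentzN_top_anglePower_le_one (hp0 : p ≠ 0) (hpt : p ≠ ⊤) :
    lorentzN p ⊤ (anglePower (1 / p).toReal) ≤ 1 := by
  have hb := one_div_toReal_pos hp0 hpt
  rw [lorentzN_top_eq_iSup_distribution hp0 hpt]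
  refine iSup_le fun l => ?_
  rcases eq_or_ne l ⊤ with rfl | hlt
  · simp only [distribution, not_top_lt, Set.ofPred_false, measure_empty,
      ENNReal.zero_rpow_of_pos hb, mul_zero, zero_le]
  rcases eq_or_ne l 0 with rfl | hl0
  · simp
  have hl := ENNReal.toReal_pos hl0 hlt
  rw [← ENNReal.ofReal_toReal hlt, distribution_anglePower hb hl,
    ENNReal.ofReal_rpow_of_nonneg (by positivity) hb.le, ← ENNReal.ofReal_mul hl.le,
    ENNReal.ofReal_le_one]
  calc _ ≤ l.toReal * (l.toReal ^ (-(1 / p).toReal⁻¹)) ^ (1 / p).toReal := by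
        gcongr
        exact min_le_left _ _
    _ = 1 := by
        rw [← Real.rpow_mul hl.le, neg_mul, inv_mul_cancel₀ hb.ne', Real.rpow_neg_one,
          mul_inv_cancel₀ hl.ne']

lemma lorentzN_anglePower (hp0 : p ≠ 0) (hpt : p ≠ ⊤) (hq0 : q ≠ 0) (hqt : q ≠ ⊤) :
    lorentzN p q (anglePower (1 / p).toReal) = ⊤ := by
  have hb := one_div_toReal_pos hp0 hpt
  have hconst : 0 < ENNReal.ofReal (1 / (1 / p).toReal) := ENNReal.ofReal_pos.2 (by positivity)
  have hintegrand : ∀ t ∈ Set.Ioi (1 : ℝ), 1 = (ENNReal.ofReal t *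
      distribution μ (anglePower (1 / p).toReal) (ENNReal.ofReal t) ^ (1 / p).toReal) ^
        q.toReal := by
    intro t (ht : 1 < t)
    have ht0 : 0 < t := one_pos.trans ht
    have hmin : min (t ^ (-(1 / p).toReal⁻¹)) 1 = t ^ (-(1 / p).toReal⁻¹) :=
      min_eq_left (Real.rpow_le_one_of_one_le_of_nonpos ht.le (by simp))
    rw [distribution_anglePower hb ht0, hmin, ENNReal.ofReal_rpow_of_nonneg (by positivity) hb.le,
      ← Real.rpow_mul ht0.le, neg_mul, inv_mul_cancel₀ hb.ne', Real.rpow_neg_one,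
      ← ENNReal.ofReal_mul ht0.le, mul_inv_cancel₀ ht0.ne', ENNReal.ofReal_one, ENNReal.one_rpow]
  have hlintegral : ∫⁻ t, (ENNReal.ofReal t * distribution μ (anglePower (1 / p).toReal)
      (ENNReal.ofReal t) ^ (1 / p).toReal) ^ q.toReal ∂logMeasure = ⊤ := by
    refine top_le_iff.1 (le_trans ?_ (setLIntegral_le_lintegral (Set.Ioi 1) _))
    rw [← setLIntegral_congr_fun measurableSet_Ioi hintegrand, setLIntegral_one, logMeasure_Ioi]
  rw [lorentzN_eq_lintegral_distribution hp0 hpt hq0 hqt, hlintegral, ENNReal.mul_top hconst.ne',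
    ENNReal.top_rpow_of_pos (one_div_toReal_pos hq0 hqt)]

lemma not_prodN_multN_lt_top_iff (hp₁0 : p₁ ≠ 0) (hp₁t : p₁ ≠ ⊤) (hr0 : r ≠ 0) (hrt : r ≠ ⊤)
    [ENNReal.HolderTriple p₁ r p] (hq0 : q ≠ 0) (hqt : q ≠ ⊤) :
    ¬ ∀ h, AEStronglyMeasurable h μ →
      (prodN (lorentzN p₁ q) (multN (lorentzN p₁ q) (lorentzN p ⊤)) h < ⊤ ↔
        lorentzN p ⊤ h < ⊤) := by
  intro hiff
  obtain ⟨hp0, hpt⟩ := ne_zero_and_ne_top_of_holderTriple (p := p) hp₁0 hp₁t hr0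
  have hprod := (hiff _ (measurable_anglePower _).aestronglyMeasurable).2
    ((lorentzN_top_anglePower_le_one hp0 hpt).trans_lt ENNReal.one_lt_top)
  have hone := (hasDilationExponent_lorentzN hp₁0 hp₁t hq0).one_ne_top
  have hle := lorentzN_le_prodN_multN hp₁0 hp₁t hr0 hrt (p := p) hq0 hqt
    (anglePower (1 / p).toReal)
  rw [lorentzN_anglePower hp0 hpt hq0 hqt] at hle
  exact (hle.trans_lt (ENNReal.mul_lt_top (by finiteness) hprod)).ne rfl

end Multiplier

section Exponents

variable {p p' p₁ p₂ : ℝ≥0∞}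

lemma holderConjugate_of_one_div_eq (hp : 1 ≤ p) (hp' : 1 / p' = 1 - 1 / p) :
    ENNReal.HolderConjugate p p' :=
  ⟨by rw [← one_div, ← one_div, hp', add_tsub_cancel_of_le (by simpa using hp), inv_one]⟩

lemma holderTriple_of_one_div_eq [hpp' : ENNReal.HolderConjugate p p']
    (hp₂ : 1 / p₂ = 1 + 1 / p₁ - 1 / p) : ENNReal.HolderTriple p₁ p' p₂ := by
  have hp : p⁻¹ ≠ ⊤ :=
    ENNReal.inv_ne_top.2 (zero_lt_one.trans_le (ENNReal.HolderConjugate.one_le p p')).ne'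
  have hconj : p⁻¹ + p'⁻¹ = 1 := by simpa only [inv_one] using hpp'.inv_add_inv_eq_inv
  refine ⟨?_⟩
  rw [← one_div p₂, hp₂, one_div, one_div, ← hconj, add_assoc, ENNReal.add_sub_cancel_left hp,
    add_comm]

lemma exists_holderTriple_of_lt (hp : p ≠ 0) (h : p < p₁) :
    ∃ r : ℝ≥0∞, r ≠ 0 ∧ r ≠ ⊤ ∧ ENNReal.HolderTriple p₁ r p := by
  have hinv := ENNReal.inv_lt_inv.2 h
  refine ⟨(p⁻¹ - p₁⁻¹)⁻¹, ENNReal.inv_ne_zero.2 (ENNReal.sub_ne_top (ENNReal.inv_ne_top.2 hp)),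
    ENNReal.inv_ne_top.2 (tsub_pos_of_lt hinv).ne', ⟨?_⟩⟩
  rw [inv_inv, add_tsub_cancel_of_le hinv.le]

lemma one_div_toReal_lt_one (hp₁ : p₁ ≠ 0) [ENNReal.HolderConjugate p p']
    [ENNReal.HolderTriple p₁ p' p₂] (h : (1 / p₁).toReal < (1 / p).toReal) :
    (1 / p₂).toReal < 1 := by
  have hp : p ≠ 0 := (zero_lt_one.trans_le (ENNReal.HolderConjugate.one_le p p')).ne'
  have hp' : p' ≠ 0 := (zero_lt_one.trans_le (ENNReal.HolderConjugate.one_le p' p)).ne'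
  have hsum := one_div_toReal_add (p := 1) hp hp'
  rw [div_one, ENNReal.toReal_one] at hsum
  rw [one_div_toReal_add (p := p₂) hp₁ hp']
  linarith

end Exponents

/-- For `X = L^{p₁,1}` and `Y = L^{p,∞}` with `1 < p < p₁ < ∞`,
`Y' = L^{p',1}` and `X ⊙ Y' = L^{p₂,1/2}` (equivalence of quasinorms), where
`1/p₂ = 1 + 1/p₁ - 1/p < 1`; moreover `β_X = 1/p₁ < 1/p = α_Y`, `X ⊙ Y'` has nontrivial
Boyd indices, while `X` does not factorize `Y`: `X ⊙ M(X,Y) ≠ Y`. -/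
theorem lorentz_example (p p1 p' p2 : ℝ≥0∞)
    (hp : 1 < p) (hpp1 : p < p1) (hp1 : p1 < ⊤)
    (hp' : 1 / p' = 1 - 1 / p) (hp2 : 1 / p2 = 1 + 1 / p1 - 1 / p) :
    (∃ c₁ c₂ : ℝ≥0∞, 0 < c₁ ∧ c₂ < ⊤ ∧ ∀ h : 𝕋 → ℂ, AEStronglyMeasurable h μ →
      c₁ * lorentzN p2 (1 / 2) h ≤ prodN (lorentzN p1 1) (lorentzN p' 1) h ∧
      prodN (lorentzN p1 1) (lorentzN p' 1) h ≤ c₂ * lorentzN p2 (1 / 2) h) ∧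
    boydUpper (lorentzN p1 1) (1 / p1).toReal ∧
    boydLower (lorentzN p ⊤) (1 / p).toReal ∧
    (1 / p1).toReal < (1 / p).toReal ∧
    NontrivialBoyd (prodN (lorentzN p1 1) (lorentzN p' 1)) ∧
    ¬ (∀ h : 𝕋 → ℂ, AEStronglyMeasurable h μ →
        (prodN (lorentzN p1 1) (multN (lorentzN p1 1) (lorentzN p ⊤)) h < ⊤ ↔
          lorentzN p ⊤ h < ⊤)) := by
  have hp0 : p ≠ 0 := (zero_lt_one.trans hp).ne'
  have hp1_one : 1 ≤ p1 := (hp.trans hpp1).le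
  have hp1_zero : p1 ≠ 0 := (zero_lt_one.trans_le hp1_one).ne'
  have hlt : (1 / p1).toReal < (1 / p).toReal := ENNReal.toReal_strict_mono (by simpa using hp0)
    (by simpa only [one_div] using ENNReal.inv_lt_inv.2 hpp1)
  have : ENNReal.HolderConjugate p p' := holderConjugate_of_one_div_eq hp.le hp'
  have : ENNReal.HolderTriple p1 p' p2 := holderTriple_of_one_div_eq (p := p) hp2
  have hp'_one : 1 ≤ p' := ENNReal.HolderConjugate.one_le p' p
  have hp'_top : p' ≠ ⊤ := (ENNReal.HolderConjugate.ne_top_iff_ne_one p' p).2 hp.ne'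
  obtain ⟨hp2_zero, hp2_top⟩ := ne_zero_and_ne_top_of_holderTriple (p := p2) hp1_zero hp1.ne
    (zero_lt_one.trans_le hp'_one).ne'
  have hequiv := normEquiv_prodN_lorentzN_one (p := p2) hp1_one hp1.ne hp'_one hp'_top
  have hprod := (hasDilationExponent_lorentzN hp2_zero hp2_top (by simp)).of_normEquiv hequiv
  obtain ⟨r, hr_zero, hr_top, _⟩ := exists_holderTriple_of_lt hp0 hpp1
  exact ⟨hequiv, (hasDilationExponent_lorentzN hp1_zero hp1.ne one_ne_zero).boydUpper,
    (hasDilationExponent_lorentzN hp0 (hpp1.trans hp1).ne ENNReal.top_ne_zero).boydLower, hlt,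
    ⟨_, _, one_div_toReal_pos hp2_zero hp2_top, one_div_toReal_lt_one (p' := p') hp1_zero hlt,
      hprod.boydLower, hprod.boydUpper⟩,
    not_prodN_multN_lt_top_iff hp1_zero hp1.ne hr_zero hr_top one_ne_zero ENNReal.one_ne_top⟩

end
end
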